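/- arXiv:1501.00423 — 2 statements merged into one kernel-verified Lean document; each statement's English description precedes it below -/
import Mathlib

section
/- Let Ω ⊂ ℝⁿ be a bounded connected open set whose signed distance function d is C² on a neighborhood of ∂Ω. Assume condition (reg22) (uniform continuity of b), condition (reg2) (β-Hölder continuity of σ with β ∈ (1/2,1]), condition (invariance), and that F satisfies the Strong Minimum Principle in Ω (every lower semicontinuous viscosity supersolution of F[u]=0 attaining its minimum over Ω at an interior point is constant). If v : Ω → ℝ is lower semicontinuous, is a viscosity supersolution of F[v]=0 in Ω, and satisfies liminf_{x→∂Ω} v(x)/(−log d(x)) ≥ 0, then v is constant. -/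
/-!
Near `∂Ω` the function `ε log d` is a strict subsolution. Its gradient is `(ε / d) Dd` and its
Hessian `(ε / d) D²d - (ε / d²) Dd ⊗ Dd`; since `Dd(x) = Dd(z)` at a nearest boundary point `z`,
where `σᵀDd` vanishes, the Hölder condition gives `|σᵀDd|² ≤ B² d^(2β)` at `x`, hence
`F[ε log d] ≤ (ε / d) (B² d^(2β - 1) - k d^γ) < 0` for small `d`, as `γ < 2β - 1`. By the growth
condition `v - ε log d` attains its minimum over `Ω`, and `v` being a supersolution the minimum
point stays in a compact set `{d ≥ s}` independent of `ε`. Letting `ε → 0`, `v` attains its minimum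
over `Ω`, and the Strong Minimum Principle applies.
-/


open scoped InnerProductSpace Matrix
open Filter

noncomputable section

/-- The signed distance to the boundary of `Ω`:
`d(x) = dist(x, Ωᶜ) - dist(x, closure Ω)`. -/
def sdist {n : ℕ} (Ω : Set (EuclideanSpace ℝ (Fin n))) (x : EuclideanSpace ℝ (Fin n)) : ℝ :=
  Metric.infDist x Ωᶜ - Metric.infDist x (closure Ω)

/-- The distance to the topological boundary of `Ω`. -/
def bdist {n : ℕ} (Ω : Set (EuclideanSpace ℝ (Fin n))) (x : EuclideanSpace ℝ (Fin n)) : ℝ :=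
  Metric.infDist x (frontier Ω)

/-- The Frobenius (Euclidean) norm of a matrix. -/
def mnorm {n r : ℕ} (M : Matrix (Fin n) (Fin r) ℝ) : ℝ :=
  Real.sqrt (∑ i, ∑ j, M i j ^ 2)

/-- The quadratic form `v ↦ v ⬝ X v`. -/
def quadForm {n : ℕ} (X : Matrix (Fin n) (Fin n) ℝ) (v : EuclideanSpace ℝ (Fin n)) : ℝ :=
  ∑ i, ∑ j, X i j * v i * v j

/-- `Mᵀ v` as a vector in `ℝʳ` (used for `σ(x,α)ᵀ Dd(x)`). -/
def sigmaT {n r : ℕ} (M : Matrix (Fin n) (Fin r) ℝ) (v : EuclideanSpace ℝ (Fin n)) :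
    Fin r → ℝ :=
  Matrix.mulVec Mᵀ (fun i => v i)

/-- The second-order superjet of `u` at `x` relative to `S`. -/
def J2plus {n : ℕ} (S : Set (EuclideanSpace ℝ (Fin n))) (u : EuclideanSpace ℝ (Fin n) → ℝ)
    (x : EuclideanSpace ℝ (Fin n)) :
    Set (EuclideanSpace ℝ (Fin n) × Matrix (Fin n) (Fin n) ℝ) :=
  { pX | pX.2.IsSymm ∧ ∀ ε > (0 : ℝ), ∀ᶠ y in nhdsWithin x S,
      u y - u x - ⟪pX.1, y - x⟫_ℝ - (1 / 2) * quadForm pX.2 (y - x) ≤ ε * ‖y - x‖ ^ 2 }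

/-- The second-order subjet of `u` at `x` relative to `S`: `J^{2,-}u = -J^{2,+}(-u)`. -/
def J2minus {n : ℕ} (S : Set (EuclideanSpace ℝ (Fin n))) (u : EuclideanSpace ℝ (Fin n) → ℝ)
    (x : EuclideanSpace ℝ (Fin n)) :
    Set (EuclideanSpace ℝ (Fin n) × Matrix (Fin n) (Fin n) ℝ) :=
  { qZ | (-qZ.1, -qZ.2) ∈ J2plus S (fun y => -u y) x }

/-- The first-order superdifferential of `u` at `x` relative to `S`. -/
def D1plus {n : ℕ} (S : Set (EuclideanSpace ℝ (Fin n))) (u : EuclideanSpace ℝ (Fin n) → ℝ)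
    (x : EuclideanSpace ℝ (Fin n)) : Set (EuclideanSpace ℝ (Fin n)) :=
  { q | ∀ ε > (0 : ℝ), ∀ᶠ y in nhdsWithin x S, u y - u x - ⟪q, y - x⟫_ℝ ≤ ε * ‖y - x‖ }

/-- The Bellman operator `F(x,p,X) = sup_{α ∈ A} (-b(x,α)·p - tr(σσᵀ X))`. -/
def Fop {n m r : ℕ} (A : Set (Fin m → ℝ))
    (b : EuclideanSpace ℝ (Fin n) → (Fin m → ℝ) → EuclideanSpace ℝ (Fin n))
    (σ : EuclideanSpace ℝ (Fin n) → (Fin m → ℝ) → Matrix (Fin n) (Fin r) ℝ)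
    (x p : EuclideanSpace ℝ (Fin n)) (X : Matrix (Fin n) (Fin n) ℝ) : ℝ :=
  sSup ((fun α => -⟪b x α, p⟫_ℝ - Matrix.trace (σ x α * (σ x α)ᵀ * X)) '' A)

/-- The Hamiltonian `H(x,p,X) = sup_{α ∈ A} (-b(x,α)·p - tr(σσᵀ X) - l(x,α))`. -/
def Hop {n m r : ℕ} (A : Set (Fin m → ℝ))
    (b : EuclideanSpace ℝ (Fin n) → (Fin m → ℝ) → EuclideanSpace ℝ (Fin n))
    (σ : EuclideanSpace ℝ (Fin n) → (Fin m → ℝ) → Matrix (Fin n) (Fin r) ℝ)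
    (l : EuclideanSpace ℝ (Fin n) → (Fin m → ℝ) → ℝ)
    (x p : EuclideanSpace ℝ (Fin n)) (X : Matrix (Fin n) (Fin n) ℝ) : ℝ :=
  sSup ((fun α => -⟪b x α, p⟫_ℝ - Matrix.trace (σ x α * (σ x α)ᵀ * X) - l x α) '' A)

/-- The set of projections of `x` onto `∂Ω`. -/
def projSet {n : ℕ} (Ω : Set (EuclideanSpace ℝ (Fin n))) (x : EuclideanSpace ℝ (Fin n)) :
    Set (EuclideanSpace ℝ (Fin n)) :=
  { z | z ∈ frontier Ω ∧ dist x z = bdist Ω x }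

/-- The interior normal directions at a boundary point `z`. -/
def normalDirs {n : ℕ} (Ω : Set (EuclideanSpace ℝ (Fin n))) (z : EuclideanSpace ℝ (Fin n)) :
    Set (EuclideanSpace ℝ (Fin n)) :=
  { ν | ‖ν‖ = 1 ∧ ∃ x ∈ Ω, x = z + bdist Ω x • ν }

open scoped Topology

section Hessian

variable {E F : Type*} [NormedAddCommGroup E] [NormedSpace ℝ E]
  [NormedAddCommGroup F] [NormedSpace ℝ F]

theorem isLittleO_sub_taylor_two {f : E → F} {f' : E → E →L[ℝ] F} {f'' : E →L[ℝ] E →L[ℝ] F}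
    {x : E} (hf : ∀ᶠ y in 𝓝 x, HasFDerivAt f (f' y) y) (hf' : HasFDerivAt f' f'' x) :
    (fun y => f y - f x - f' x (y - x) - (1 / 2 : ℝ) • f'' (y - x) (y - x))
      =o[𝓝 x] fun y => ‖y - x‖ ^ 2 := by
  have hsymm : ∀ u w, f'' u w = f'' w u :=
    second_derivative_symmetric_of_eventually_of_real hf hf'
  obtain ⟨ρ, hρ, hball⟩ := Metric.eventually_nhds_iff_ball.1 hf
  have hremainder : ∀ y ∈ Metric.ball x ρ, HasFDerivWithinAt
      (fun y => f y - f' x (y - x) - (1 / 2 : ℝ) • f'' (y - x) (y - x))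
      (f' y - f' x - f'' (y - x)) (Metric.ball x ρ) y := by
    intro y hy
    have hsub : HasFDerivAt (fun y => y - x) (ContinuousLinearMap.id ℝ E) y :=
      (hasFDerivAt_id y).sub_const x
    have hquad := ((f''.hasFDerivAt.comp y hsub).clm_apply hsub).const_smul (1 / 2 : ℝ)
    refine (((hball y hy).sub ((f' x).hasFDerivAt.comp y hsub)).sub
      hquad).hasFDerivWithinAt.congr_fderiv ?_
    ext u
    have : (2⁻¹ : ℝ) • (f'' y u - f'' x u) + (2⁻¹ : ℝ) • (f'' y u - f'' x u) =
        f'' y u - f'' x u := by module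
    simpa [hsymm u y, hsymm u x] using this
  have hderiv : (fun y => f' y - f' x - f'' (y - x)) =o[𝓝 x] fun y => ‖y - x‖ ^ 1 := by
    simpa only [pow_one] using hf'.isLittleO.norm_right
  have hnhds : 𝓝[Metric.ball x ρ] x = 𝓝 x :=
    nhdsWithin_eq_nhds.2 (Metric.ball_mem_nhds x hρ)
  have := (convex_ball x ρ).isLittleO_pow_succ (Metric.mem_ball_self hρ) hremainder
    (hnhds.symm ▸ hderiv)
  rw [hnhds] at this
  refine this.congr_left fun y => ?_
  simp only [sub_self, map_zero, smul_zero, sub_zero]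
  abel

end Hessian

section HilbertHessian

variable {E : Type*} [NormedAddCommGroup E] [InnerProductSpace ℝ E] [CompleteSpace E]

/-- `φ` is twice differentiable at `x`, with Hessian the operator `T`. The gradient field `G` of `φ`
near `x` is part of the data, so that `T` is simply the derivative of `G`. -/
structure HasHessianAt (φ : E → ℝ) (G : E → E) (T : E →L[ℝ] E) (x : E) : Prop where
  hasGradientAt : ∀ᶠ y in 𝓝 x, HasGradientAt φ (G y) y
  hasFDerivAt : HasFDerivAt G T x

namespace HasHessianAt

variable {φ : E → ℝ} {G : E → E} {T : E →L[ℝ] E} {x : E}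

theorem eventually_hasFDerivAt (h : HasHessianAt φ G T x) :
    ∀ᶠ y in 𝓝 x, HasFDerivAt φ (innerSL ℝ (G y)) y :=
  h.hasGradientAt.mono fun _ hy => hy.hasFDerivAt

theorem hasFDerivAt_innerSL (h : HasHessianAt φ G T x) :
    HasFDerivAt (fun y => innerSL ℝ (G y)) ((innerSL ℝ).comp T) x :=
  (innerSL ℝ (E := E)).hasFDerivAt.comp x h.hasFDerivAt

theorem isSymmetric (h : HasHessianAt φ G T x) : T.IsSymmetric := fun u w => by
  have := second_derivative_symmetric_of_eventually_of_real h.eventually_hasFDerivAt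
    h.hasFDerivAt_innerSL u w
  simpa [real_inner_comm u] using this

theorem isLittleO (h : HasHessianAt φ G T x) :
    (fun y => φ y - φ x - ⟪G x, y - x⟫_ℝ - 1 / 2 * ⟪T (y - x), y - x⟫_ℝ)
      =o[𝓝 x] fun y => ‖y - x‖ ^ 2 :=
  isLittleO_sub_taylor_two h.eventually_hasFDerivAt h.hasFDerivAt_innerSL

theorem scomp (h : HasHessianAt φ G T x) {g g' : ℝ → ℝ} {g'' : ℝ}
    (hg : ∀ᶠ t in 𝓝 (φ x), HasDerivAt g (g' t) t) (hg' : HasDerivAt g' g'' (φ x)) :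
    HasHessianAt (g ∘ φ) (fun y => g' (φ y) • G y)
      (g' (φ x) • T + g'' • InnerProductSpace.rankOne ℝ (G x) (G x)) x where
  hasGradientAt := by
    have hcont : ContinuousAt φ x := h.eventually_hasFDerivAt.self_of_nhds.continuousAt
    filter_upwards [h.eventually_hasFDerivAt, hcont.eventually hg] with y hφ hgy
    rw [hasGradientAt_iff_hasFDerivAt, map_smul]
    exact hgy.comp_hasFDerivAt y hφ
  hasFDerivAt := by
    have hφ := h.eventually_hasFDerivAt.self_of_nhds
    refine ((hg'.comp_hasFDerivAt x hφ).smul h.hasFDerivAt).congr_fderiv ?_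
    ext u
    simp [mul_smul]

theorem const_mul_log (h : HasHessianAt φ G T x) (hx : φ x ≠ 0) (ε : ℝ) :
    HasHessianAt (fun y => ε * Real.log (φ y)) (fun y => (ε * (φ y)⁻¹) • G y)
      ((ε * (φ x)⁻¹) • T +
        (ε * -(φ x ^ 2)⁻¹) • InnerProductSpace.rankOne ℝ (G x) (G x)) x :=
  h.scomp (g := fun t => ε * Real.log t) (g' := fun t => ε * t⁻¹)
    ((isOpen_ne.eventually_mem hx).mono fun _ ht => (Real.hasDerivAt_log ht).const_mul ε)
    ((hasDerivAt_inv hx).const_mul ε)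

end HasHessianAt

end HilbertHessian

section Matrix

variable {n r : ℕ}

theorem inner_toEuclideanCLM_self (X : Matrix (Fin n) (Fin n) ℝ) (u : EuclideanSpace ℝ (Fin n)) :
    ⟪Matrix.toEuclideanCLM (𝕜 := ℝ) X u, u⟫_ℝ = quadForm X u := by
  rw [real_inner_comm, Matrix.inner_toEuclideanCLM]
  simp only [quadForm, dotProduct, Matrix.mulVec, Finset.mul_sum]
  exact Finset.sum_congr rfl fun i _ => Finset.sum_congr rfl fun j _ => by ring

theorem toContinuousLinearMap_toEuclideanLin (X : Matrix (Fin n) (Fin n) ℝ) :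
    LinearMap.toContinuousLinearMap (Matrix.toEuclideanLin X) =
      Matrix.toEuclideanCLM (𝕜 := ℝ) X := by
  rw [← Matrix.coe_toEuclideanCLM_eq_toEuclideanLin]
  rfl

theorem toEuclideanCLM_vecMulVec (p q : EuclideanSpace ℝ (Fin n)) :
    Matrix.toEuclideanCLM (𝕜 := ℝ) (Matrix.vecMulVec p.ofLp q.ofLp) =
      InnerProductSpace.rankOne ℝ p q := by
  ext u i
  simp [Matrix.vecMulVec_mulVec, PiLp.inner_apply, dotProduct, mul_comm]

theorem quadForm_neg (X : Matrix (Fin n) (Fin n) ℝ) (u : EuclideanSpace ℝ (Fin n)) :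
    quadForm (-X) u = -quadForm X u := by
  simp [quadForm]

theorem sigmaT_sub (M N : Matrix (Fin n) (Fin r) ℝ) (p : EuclideanSpace ℝ (Fin n)) :
    sigmaT (M - N) p = sigmaT M p - sigmaT N p := by
  simp [sigmaT, Matrix.sub_mulVec]

theorem trace_mul_transpose_mul_vecMulVec (M : Matrix (Fin n) (Fin r) ℝ)
    (p : EuclideanSpace ℝ (Fin n)) :
    Matrix.trace (M * Mᵀ * Matrix.vecMulVec p.ofLp p.ofLp) = sigmaT M p ⬝ᵥ sigmaT M p := by
  rw [Matrix.mul_vecMulVec, Matrix.trace_vecMulVec, ← Matrix.mulVec_mulVec,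
    dotProduct_comm, Matrix.dotProduct_mulVec, ← Matrix.mulVec_transpose]
  rfl

theorem sigmaT_dotProduct_self_le (M : Matrix (Fin n) (Fin r) ℝ) (p : EuclideanSpace ℝ (Fin n)) :
    sigmaT M p ⬝ᵥ sigmaT M p ≤ mnorm M ^ 2 * ‖p‖ ^ 2 := by
  rw [mnorm, Real.sq_sqrt (by positivity), EuclideanSpace.real_norm_sq_eq, Finset.sum_comm,
    Finset.sum_mul]
  refine Finset.sum_le_sum fun j _ => ?_
  rw [← sq]
  exact Finset.sum_mul_sq_le_sq_mul_sq Finset.univ (fun i => M i j) p.ofLp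

theorem sigmaT_dotProduct_self_le_of_sigmaT_eq_zero {M N : Matrix (Fin n) (Fin r) ℝ}
    {p : EuclideanSpace ℝ (Fin n)} (hN : sigmaT N p = 0) :
    sigmaT M p ⬝ᵥ sigmaT M p ≤ mnorm (M - N) ^ 2 * ‖p‖ ^ 2 := by
  simpa [sigmaT_sub, hN] using sigmaT_dotProduct_self_le (M - N) p

theorem Fop_smul_add_smul_vecMulVec_le {m : ℕ} {A : Set (Fin m → ℝ)} (hA : A.Nonempty)
    {b : EuclideanSpace ℝ (Fin n) → (Fin m → ℝ) → EuclideanSpace ℝ (Fin n)}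
    {σ : EuclideanSpace ℝ (Fin n) → (Fin m → ℝ) → Matrix (Fin n) (Fin r) ℝ}
    {x p : EuclideanSpace ℝ (Fin n)} {X : Matrix (Fin n) (Fin n) ℝ} {κ Λ c₁ c₂ : ℝ}
    (hdrift : ∀ α ∈ A, κ ≤ ⟪b x α, p⟫_ℝ + Matrix.trace (σ x α * (σ x α)ᵀ * X))
    (hdiffusion : ∀ α ∈ A, sigmaT (σ x α) p ⬝ᵥ sigmaT (σ x α) p ≤ Λ)
    (hc₁ : 0 ≤ c₁) (hc₂ : c₂ ≤ 0) :
    Fop A b σ x (c₁ • p) (c₁ • X + c₂ • Matrix.vecMulVec p.ofLp p.ofLp) ≤ -(c₁ * κ + c₂ * Λ) := by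
  refine csSup_le (hA.image _) ?_
  rintro _ ⟨α, hα, rfl⟩
  have hfirst := mul_le_mul_of_nonneg_left (hdrift α hα) hc₁
  have hsecond := mul_le_mul_of_nonpos_left (hdiffusion α hα) hc₂
  simp only [inner_smul_right, Matrix.mul_add, Matrix.mul_smul, Matrix.trace_add,
    Matrix.trace_smul, trace_mul_transpose_mul_vecMulVec, smul_eq_mul]
  linarith

end Matrix

section Viscosity

variable {n : ℕ}

/-- Viscosity supersolutions of `F[v] = 0` in `Ω`, tested with the subjets relative to `Ω`. -/
structure IsViscositySupersolution
    (F : EuclideanSpace ℝ (Fin n) → EuclideanSpace ℝ (Fin n) → Matrix (Fin n) (Fin n) ℝ → ℝ)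
    (Ω : Set (EuclideanSpace ℝ (Fin n))) (v : EuclideanSpace ℝ (Fin n) → ℝ) : Prop where
  lowerSemicontinuousOn : LowerSemicontinuousOn v Ω
  nonneg : ∀ x ∈ Ω, ∀ qZ ∈ J2minus Ω v x, 0 ≤ F x qZ.1 qZ.2

/-- The Strong Minimum Principle for `F` in `Ω`: a viscosity supersolution that attains its minimum
over `Ω` is constant on `Ω`. -/
def StrongMinimumPrinciple
    (F : EuclideanSpace ℝ (Fin n) → EuclideanSpace ℝ (Fin n) → Matrix (Fin n) (Fin n) ℝ → ℝ)
    (Ω : Set (EuclideanSpace ℝ (Fin n))) : Prop :=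
  ∀ w, IsViscositySupersolution F Ω w → (∃ x₀ ∈ Ω, ∀ x ∈ Ω, w x₀ ≤ w x) →
    ∀ x ∈ Ω, ∀ y ∈ Ω, w x = w y

variable {Ω : Set (EuclideanSpace ℝ (Fin n))} {v φ : EuclideanSpace ℝ (Fin n) → ℝ}
  {G : EuclideanSpace ℝ (Fin n) → EuclideanSpace ℝ (Fin n)} {x : EuclideanSpace ℝ (Fin n)}
  {Z : Matrix (Fin n) (Fin n) ℝ}

theorem HasHessianAt.mem_J2minus (h : HasHessianAt φ G (Matrix.toEuclideanCLM (𝕜 := ℝ) Z) x)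
    (hmin : IsLocalMinOn (fun y => v y - φ y) Ω x) : (G x, Z) ∈ J2minus Ω v x := by
  have hZ : Z.IsSymm := by
    simpa [Matrix.IsHermitian, Matrix.IsSymm] using
      Matrix.isSymmetric_toEuclideanLin_iff.1 h.isSymmetric
  refine ⟨hZ.neg, fun η hη => ?_⟩
  filter_upwards [hmin, nhdsWithin_le_nhds (h.isLittleO.bound hη)] with y hy htaylor
  rw [Real.norm_eq_abs, norm_pow, norm_norm, inner_toEuclideanCLM_self] at htaylor
  have := (abs_le.1 htaylor).1
  simp only [quadForm_neg, inner_neg_left]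
  linarith

theorem IsViscositySupersolution.nonneg_of_isLocalMinOn
    {F : EuclideanSpace ℝ (Fin n) → EuclideanSpace ℝ (Fin n) → Matrix (Fin n) (Fin n) ℝ → ℝ}
    (hv : IsViscositySupersolution F Ω v) (hx : x ∈ Ω)
    (h : HasHessianAt φ G (Matrix.toEuclideanCLM (𝕜 := ℝ) Z) x)
    (hmin : IsLocalMinOn (fun y => v y - φ y) Ω x) : 0 ≤ F x (G x) Z :=
  hv.nonneg x hx _ (h.mem_J2minus hmin)

end Viscosity

section SignedDistance

theorem infDist_lineMap {E : Type*} [NormedAddCommGroup E] [NormedSpace ℝ E] {S : Set E} {x z : E}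
    (hz : z ∈ S) (h : Metric.infDist x S = dist x z) {t : ℝ} (ht : t ∈ Set.Icc (0 : ℝ) 1) :
    Metric.infDist (AffineMap.lineMap z x t) S = t * dist x z := by
  have hzt : dist (AffineMap.lineMap z x t) z = t * dist x z := by
    rw [dist_lineMap_left, Real.norm_of_nonneg ht.1, dist_comm]
  have hxt : dist x (AffineMap.lineMap z x t) = (1 - t) * dist x z := by
    rw [dist_right_lineMap, Real.norm_of_nonneg (sub_nonneg.2 ht.2), dist_comm]
  refine le_antisymm (hzt ▸ Metric.infDist_le_dist_of_mem hz) ?_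
  linarith [Metric.infDist_le_infDist_add_dist (s := S) (x := x) (y := AffineMap.lineMap z x t)]

theorem inner_sub_eq_of_hasGradientAt_lineMap {E : Type*} [NormedAddCommGroup E]
    [InnerProductSpace ℝ E] [CompleteSpace E] {f : E → ℝ} {x z p : E} {c t : ℝ}
    (hf : ∀ s ∈ Set.Icc (0 : ℝ) 1, f (AffineMap.lineMap z x s) = s * c)
    (ht : t ∈ Set.Icc (0 : ℝ) 1) (hp : HasGradientAt f p (AffineMap.lineMap z x t)) :
    ⟪p, x - z⟫_ℝ = c := by
  have hchain : HasDerivWithinAt (f ∘ AffineMap.lineMap z x) ⟪p, x - z⟫_ℝ (Set.Icc 0 1) t :=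
    (hp.hasFDerivAt.comp_hasDerivAt t AffineMap.hasDerivAt_lineMap).hasDerivWithinAt
  have hlinear : HasDerivWithinAt (f ∘ AffineMap.lineMap z x) c (Set.Icc 0 1) t :=
    (hasDerivAt_mul_const c).hasDerivWithinAt.congr hf (hf t ht)
  exact UniqueDiffWithinAt.eq_deriv _ (uniqueDiffOn_Icc zero_lt_one t ht) hchain hlinear

variable {n : ℕ} {Ω : Set (EuclideanSpace ℝ (Fin n))} {x z p q : EuclideanSpace ℝ (Fin n)}

theorem continuous_sdist (Ω : Set (EuclideanSpace ℝ (Fin n))) : Continuous (sdist Ω) :=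
  (Metric.continuous_infDist_pt _).sub (Metric.continuous_infDist_pt _)

theorem sdist_of_mem_closure (hx : x ∈ closure Ω) : sdist Ω x = Metric.infDist x Ωᶜ := by
  rw [sdist, Metric.infDist_zero_of_mem hx, sub_zero]

theorem sdist_pos (hΩ : IsOpen Ω) (hne : Ω ≠ Set.univ) (hx : x ∈ Ω) : 0 < sdist Ω x := by
  rw [sdist_of_mem_closure (subset_closure hx)]
  exact (hΩ.isClosed_compl.notMem_iff_infDist_pos (Set.nonempty_compl.2 hne)).1
    (Set.notMem_compl_iff.2 hx)

theorem mem_of_sdist_pos (hx : 0 < sdist Ω x) : x ∈ Ω := by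
  contrapose! hx
  rw [sdist, Metric.infDist_zero_of_mem hx, zero_sub]
  exact neg_nonpos.2 Metric.infDist_nonneg

theorem isCompact_setOf_le_sdist (hΩ : Bornology.IsBounded Ω) {s : ℝ} (hs : 0 < s) :
    IsCompact {x ∈ Ω | s ≤ sdist Ω x} := by
  refine Metric.isCompact_of_isClosed_isBounded ?_ (hΩ.subset (Set.sep_subset _ _))
  have : {x ∈ Ω | s ≤ sdist Ω x} = {x | s ≤ sdist Ω x} :=
    Set.ext fun x => and_iff_right_of_imp fun hx => mem_of_sdist_pos (hs.trans_le hx)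
  exact this ▸ isClosed_le continuous_const (continuous_sdist Ω)

theorem exists_mem_frontier_sdist_eq_dist (hne : Ω ≠ Set.univ) (hx : x ∈ Ω) :
    ∃ z ∈ frontier Ω, sdist Ω x = dist x z := by
  rw [sdist_of_mem_closure (subset_closure hx)]
  exact exists_mem_frontier_infDist_compl_eq_dist hx hne

theorem sdist_lineMap (hx : x ∈ Ω) (hz : z ∈ Ωᶜ) (h : sdist Ω x = dist x z) {t : ℝ}
    (ht : t ∈ Set.Icc (0 : ℝ) 1) : sdist Ω (AffineMap.lineMap z x t) = t * dist x z := by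
  rw [sdist_of_mem_closure (subset_closure hx)] at h
  have hmem : AffineMap.lineMap z x t ∈ closure Ω := by
    refine Metric.closedBall_infDist_compl_subset_closure hx ?_
    rw [Metric.mem_closedBall, h, dist_lineMap_right, Real.norm_of_nonneg (sub_nonneg.2 ht.2),
      dist_comm]
    exact mul_le_of_le_one_left dist_nonneg (sub_le_self 1 ht.1)
  rw [sdist_of_mem_closure hmem, infDist_lineMap hz h ht]

theorem gradient_sdist_eq_of_sdist_eq_dist (hx : x ∈ Ω) (hz : z ∈ Ωᶜ) (h : sdist Ω x = dist x z)
    (hp : HasGradientAt (sdist Ω) p x) (hp₁ : ‖p‖ = 1)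
    (hq : HasGradientAt (sdist Ω) q z) (hq₁ : ‖q‖ = 1) : p = q := by
  -- Equality in Cauchy–Schwarz: if `|w| = 1` and `w · (x - z) = |x - z|`, then
  -- `w = (x - z) / |x - z|`.
  have hunit : ∀ w t, t ∈ Set.Icc (0 : ℝ) 1 →
      HasGradientAt (sdist Ω) w (AffineMap.lineMap z x t) → ‖w‖ = 1 → ‖x - z‖ • w = x - z := by
    intro w t ht hw hw₁
    have hinner :=
      inner_sub_eq_of_hasGradientAt_lineMap (fun s hs => sdist_lineMap hx hz h hs) ht hw
    rw [dist_eq_norm] at hinner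
    simpa [hw₁] using inner_eq_norm_mul_iff_real.1 (hinner.trans (by rw [hw₁, one_mul]))
  have hxz : x - z ≠ 0 := sub_ne_zero.2 fun hxz => hz (hxz ▸ hx)
  refine smul_right_injective _ (norm_ne_zero_iff.2 hxz) ?_
  exact (hunit p 1 (by simp) (by simpa using hp) hp₁).trans
    (hunit q 0 (by simp) (by simpa using hq) hq₁).symm

end SignedDistance

section Minimization

variable {X : Type*} [TopologicalSpace X] {Ω K : Set X} {v : X → ℝ}

theorem exists_isMinOn_of_forall_notMem_le (hK : IsCompact K) (hKΩ : K ⊆ Ω)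
    (hv : LowerSemicontinuousOn v K) {x₀ : X} (hx₀ : x₀ ∈ K)
    (h : ∀ y ∈ Ω, y ∉ K → v x₀ ≤ v y) : ∃ x ∈ Ω, IsMinOn v Ω x := by
  obtain ⟨x, hx, hmin⟩ := hv.exists_isMinOn ⟨x₀, hx₀⟩ hK
  refine ⟨x, hKΩ hx, fun y hy => ?_⟩
  by_cases hyK : y ∈ K
  · exact hmin hyK
  · exact (hmin hx₀).trans (h y hy hyK)

theorem exists_isMinOn_of_forall_isMinOn_sub_mul {φ : X → ℝ} (hK : IsCompact K)
    (hv : LowerSemicontinuousOn v K) (hφ : ContinuousOn φ K)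
    (h : ∀ ε > 0, ∃ y ∈ K, IsMinOn (fun x => v x - ε * φ x) Ω y) : ∃ x ∈ K, IsMinOn v Ω x := by
  have hne : K.Nonempty := let ⟨y, hy, _⟩ := h 1 one_pos; ⟨y, hy⟩
  obtain ⟨x, hx, hmin⟩ := hv.exists_isMinOn hne hK
  obtain ⟨C, hC⟩ := hK.bddAbove_image hφ
  refine ⟨x, hx, fun y hy => ?_⟩
  have hle : ∀ ε > 0, v x ≤ v y + ε * (C - φ y) := by
    intro ε hε
    obtain ⟨z, hz, hzmin⟩ := h ε hε
    have hxz : v x ≤ v z := hmin hz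
    have hzy : v z - ε * φ z ≤ v y - ε * φ y := hzmin hy
    have hzC : ε * φ z ≤ ε * C := by gcongr; exact hC (Set.mem_image_of_mem φ hz)
    linarith
  have hlim : Tendsto (fun ε : ℝ => v y + ε * (C - φ y)) (𝓝[>] 0) (𝓝 (v y)) := by
    have hcont : Continuous fun ε : ℝ => v y + ε * (C - φ y) := by fun_prop
    simpa using (hcont.tendsto 0).mono_left nhdsWithin_le_nhds
  exact ge_of_tendsto hlim (eventually_mem_nhdsWithin.mono hle)

theorem exists_isMinOn_sub_mul_log {d : X → ℝ} (hne : Ω.Nonempty) (hd : ContinuousOn d Ω)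
    (hpos : ∀ x ∈ Ω, 0 < d x) (hcompact : ∀ s > 0, IsCompact {x ∈ Ω | s ≤ d x})
    (hv : LowerSemicontinuousOn v Ω) {ε : ℝ} (hε : 0 < ε)
    (hgrowth : ∃ δ > 0, ∀ x ∈ Ω, d x < δ → ε / 2 * Real.log (d x) ≤ v x) :
    ∃ x ∈ Ω, IsMinOn (fun x => v x - ε * Real.log (d x)) Ω x := by
  obtain ⟨x₀, hx₀⟩ := hne
  obtain ⟨δ, hδ, hgrowth⟩ := hgrowth
  set μ := v x₀ - ε * Real.log (d x₀)
  -- Below `s`, both the growth condition and `μ ≤ -(ε / 2) * log d` hold.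
  obtain ⟨s, hs, hsδ, hsx₀, hsμ⟩ : ∃ s > 0, s ≤ δ ∧ s ≤ d x₀ ∧ s ≤ Real.exp (-(2 * μ / ε)) :=
    ⟨min δ (min (d x₀) (Real.exp (-(2 * μ / ε)))),
      lt_min hδ (lt_min (hpos x₀ hx₀) (Real.exp_pos _)), by simp⟩
  refine exists_isMinOn_of_forall_notMem_le (hcompact s hs) (Set.sep_subset _ _) ?_
    (x₀ := x₀) ⟨hx₀, hsx₀⟩ fun y hy hyK => ?_
  · simp only [sub_eq_add_neg]
    refine (hv.mono (Set.sep_subset _ _)).add (ContinuousOn.lowerSemicontinuousOn ?_)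
    exact (((hd.mono (Set.sep_subset _ _)).log fun x hx => (hpos x hx.1).ne').const_mul ε).neg
  · have hys : d y < s := not_le.1 fun hsy => hyK ⟨hy, hsy⟩
    have hlog : Real.log (d y) ≤ -(2 * μ / ε) :=
      (Real.log_le_iff_le_exp (hpos y hy)).2 (hys.le.trans hsμ)
    calc μ = -(ε / 2) * -(2 * μ / ε) := by field_simp
      _ ≤ -(ε / 2) * Real.log (d y) := mul_le_mul_of_nonpos_left hlog (by linarith)
      _ ≤ v y - ε * Real.log (d y) := by linarith [hgrowth y hy (hys.trans_le hsδ)]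

end Minimization

theorem eventually_mul_rpow_lt_mul_rpow {k γ ρ : ℝ} (C : ℝ) (hk : 0 < k) (h : γ < ρ) :
    ∀ᶠ t in 𝓝[>] (0 : ℝ), C * t ^ ρ < k * t ^ γ := by
  have hlim : Tendsto (fun t : ℝ => C * t ^ (ρ - γ)) (𝓝[>] 0) (𝓝 0) := by
    have hcont : ContinuousAt (fun t : ℝ => C * t ^ (ρ - γ)) 0 :=
      (Real.continuousAt_rpow_const 0 _ (Or.inr (sub_nonneg.2 h.le))).const_mul C
    simpa [Real.zero_rpow (sub_pos.2 h).ne'] using hcont.tendsto.mono_left nhdsWithin_le_nhds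
  filter_upwards [hlim.eventually (gt_mem_nhds hk), self_mem_nhdsWithin] with t hlt ht
  calc C * t ^ ρ = C * t ^ (ρ - γ) * t ^ γ := by
        rw [mul_assoc, ← Real.rpow_add ht, sub_add_cancel]
    _ < k * t ^ γ := mul_lt_mul_of_pos_right hlt (Real.rpow_pos_of_pos ht γ)

section Barrier

variable {n m r : ℕ} {Ω : Set (EuclideanSpace ℝ (Fin n))} {A : Set (Fin m → ℝ)}
  {b : EuclideanSpace ℝ (Fin n) → (Fin m → ℝ) → EuclideanSpace ℝ (Fin n)}
  {σ : EuclideanSpace ℝ (Fin n) → (Fin m → ℝ) → Matrix (Fin n) (Fin r) ℝ}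
  {δ₀ : ℝ} {Dd : EuclideanSpace ℝ (Fin n) → EuclideanSpace ℝ (Fin n)}
  {D2d : EuclideanSpace ℝ (Fin n) → Matrix (Fin n) (Fin n) ℝ}

theorem hasHessianAt_const_mul_log_sdist {x : EuclideanSpace ℝ (Fin n)}
    (hDd : ∀ y, |sdist Ω y| < δ₀ → HasGradientAt (sdist Ω) (Dd y) y)
    (hD2d : HasFDerivAt Dd (Matrix.toEuclideanCLM (𝕜 := ℝ) (D2d x)) x)
    (hx : |sdist Ω x| < δ₀) (hx₀ : sdist Ω x ≠ 0) (ε : ℝ) :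
    HasHessianAt (fun y => ε * Real.log (sdist Ω y)) (fun y => (ε * (sdist Ω y)⁻¹) • Dd y)
      (Matrix.toEuclideanCLM (𝕜 := ℝ) ((ε * (sdist Ω x)⁻¹) • D2d x +
        (ε * -(sdist Ω x ^ 2)⁻¹) • Matrix.vecMulVec (Dd x).ofLp (Dd x).ofLp)) x := by
  have hnear : ∀ᶠ y in 𝓝 x, |sdist Ω y| < δ₀ :=
    (continuous_sdist Ω).abs.continuousAt.eventually (gt_mem_nhds hx)
  rw [map_add, map_smul, map_smul, toEuclideanCLM_vecMulVec]
  exact HasHessianAt.const_mul_log ⟨hnear.mono hDd, hD2d⟩ hx₀ ε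

theorem sigmaT_gradient_sdist_dotProduct_self_le {x : EuclideanSpace ℝ (Fin n)}
    (hΩ : IsOpen Ω) (hne : Ω ≠ Set.univ)
    (hDd : ∀ y, |sdist Ω y| < δ₀ → HasGradientAt (sdist Ω) (Dd y) y)
    (hDd₁ : ∀ y, |sdist Ω y| < δ₀ → ‖Dd y‖ = 1)
    {M : EuclideanSpace ℝ (Fin n) → Matrix (Fin n) (Fin r) ℝ} {β B : ℝ}
    (hM : ∀ y ∈ closure Ω, ∀ z ∈ closure Ω, mnorm (M y - M z) ≤ B * ‖y - z‖ ^ β)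
    (hM₀ : ∀ z ∈ frontier Ω, sigmaT (M z) (Dd z) = 0)
    (hx : x ∈ Ω) (hxδ₀ : sdist Ω x < δ₀) :
    sigmaT (M x) (Dd x) ⬝ᵥ sigmaT (M x) (Dd x) ≤ (B * sdist Ω x ^ β) ^ 2 := by
  have hpos := sdist_pos hΩ hne hx
  have hxabs : |sdist Ω x| < δ₀ := by rwa [abs_of_pos hpos]
  obtain ⟨z, hz, hxz⟩ := exists_mem_frontier_sdist_eq_dist hne hx
  have hzΩ : z ∈ Ωᶜ := (hΩ.frontier_eq ▸ hz).2
  have hzabs : |sdist Ω z| < δ₀ := by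
    rw [sdist_of_mem_closure (frontier_subset_closure hz), Metric.infDist_zero_of_mem hzΩ, abs_zero]
    exact hpos.trans hxδ₀
  have hgradient : Dd x = Dd z := gradient_sdist_eq_of_sdist_eq_dist hx hzΩ hxz
    (hDd x hxabs) (hDd₁ x hxabs) (hDd z hzabs) (hDd₁ z hzabs)
  have hσz : sigmaT (M z) (Dd x) = 0 := hgradient ▸ hM₀ z hz
  have hholder : mnorm (M x - M z) ≤ B * sdist Ω x ^ β := by
    simpa only [hxz, dist_eq_norm] using
      hM x (subset_closure hx) z (frontier_subset_closure hz)
  calc sigmaT (M x) (Dd x) ⬝ᵥ sigmaT (M x) (Dd x)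
      ≤ mnorm (M x - M z) ^ 2 * ‖Dd x‖ ^ 2 := sigmaT_dotProduct_self_le_of_sigmaT_eq_zero hσz
    _ = mnorm (M x - M z) ^ 2 := by rw [hDd₁ x hxabs, one_pow, mul_one]
    _ ≤ (B * sdist Ω x ^ β) ^ 2 := pow_le_pow_left₀ (Real.sqrt_nonneg _) hholder 2

theorem Fop_const_mul_log_neg (hA : A.Nonempty) {x p : EuclideanSpace ℝ (Fin n)}
    {X : Matrix (Fin n) (Fin n) ℝ} {κ B β t ε : ℝ}
    (hdrift : ∀ α ∈ A, κ ≤ ⟪b x α, p⟫_ℝ + Matrix.trace (σ x α * (σ x α)ᵀ * X))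
    (hdiffusion : ∀ α ∈ A, sigmaT (σ x α) p ⬝ᵥ sigmaT (σ x α) p ≤ (B * t ^ β) ^ 2)
    (ht : 0 < t) (hε : 0 < ε) (hlt : B ^ 2 * t ^ (2 * β - 1) < κ) :
    Fop A b σ x ((ε * t⁻¹) • p)
      ((ε * t⁻¹) • X + (ε * -(t ^ 2)⁻¹) • Matrix.vecMulVec p.ofLp p.ofLp) < 0 := by
  have hpow : (B * t ^ β) ^ 2 = B ^ 2 * t ^ (2 * β - 1) * t := by
    rw [mul_assoc, ← Real.rpow_add_one ht.ne', sub_add_cancel, mul_comm 2 β, Real.rpow_mul ht.le,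
      Real.rpow_two, mul_pow]
  have hc₁ : 0 < ε * t⁻¹ := by positivity
  have hc₂ : ε * -(t ^ 2)⁻¹ ≤ 0 := by rw [mul_neg, neg_nonpos]; positivity
  refine (Fop_smul_add_smul_vecMulVec_le hA hdrift hdiffusion hc₁.le hc₂).trans_lt ?_
  calc -(ε * t⁻¹ * κ + ε * -(t ^ 2)⁻¹ * (B * t ^ β) ^ 2)
      = ε * t⁻¹ * (B ^ 2 * t ^ (2 * β - 1) - κ) := by rw [hpow]; field_simp; ring
    _ < 0 := mul_neg_of_pos_of_neg hc₁ (sub_neg.2 hlt)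

theorem exists_forall_Fop_const_mul_log_sdist_neg (hΩ : IsOpen Ω) (hne : Ω ≠ Set.univ)
    (hA : A.Nonempty) (hδ₀ : 0 < δ₀)
    (hDd : ∀ x, |sdist Ω x| < δ₀ → HasGradientAt (sdist Ω) (Dd x) x)
    (hDd₁ : ∀ x, |sdist Ω x| < δ₀ → ‖Dd x‖ = 1) {β B δ k γ : ℝ}
    (hσ : ∀ x ∈ closure Ω, ∀ y ∈ closure Ω, ∀ α ∈ A, mnorm (σ x α - σ y α) ≤ B * ‖x - y‖ ^ β)
    (hδ : 0 < δ) (hk : 0 < k) (hγ : γ < 2 * β - 1)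
    (htangential : ∀ z ∈ frontier Ω, ∀ α ∈ A, sigmaT (σ z α) (Dd z) = 0)
    (hdrift : ∀ x ∈ Ω, sdist Ω x < δ → ∀ α ∈ A,
      k * sdist Ω x ^ γ ≤ ⟪b x α, Dd x⟫_ℝ + Matrix.trace (σ x α * (σ x α)ᵀ * D2d x)) :
    ∃ s > 0, s ≤ δ₀ ∧ ∀ x ∈ Ω, sdist Ω x < s → ∀ ε > 0,
      Fop A b σ x ((ε * (sdist Ω x)⁻¹) • Dd x)
        ((ε * (sdist Ω x)⁻¹) • D2d x +
          (ε * -(sdist Ω x ^ 2)⁻¹) • Matrix.vecMulVec (Dd x).ofLp (Dd x).ofLp) < 0 := by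
  obtain ⟨s, hs, hlt⟩ :=
    mem_nhdsGT_iff_exists_Ioo_subset.1 (eventually_mul_rpow_lt_mul_rpow (B ^ 2) hk hγ)
  refine ⟨min s (min δ δ₀), lt_min hs (lt_min hδ hδ₀), by simp, fun x hx hxs ε hε => ?_⟩
  obtain ⟨hxs, hxδ, hxδ₀⟩ : sdist Ω x < s ∧ sdist Ω x < δ ∧ sdist Ω x < δ₀ := by
    simpa only [lt_min_iff] using hxs
  have hpos := sdist_pos hΩ hne hx
  exact Fop_const_mul_log_neg hA (hdrift x hx hxδ)
    (fun α hα => sigmaT_gradient_sdist_dotProduct_self_le hΩ hne hDd hDd₁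
      (fun y hy z hz => hσ y hy z hz α hα) (fun z hz => htangential z hz α hα) hx hxδ₀)
    hpos hε (hlt ⟨hpos, hxs⟩)

end Barrier

-- The set of values of `α ↦ -b·p - tr(σσᵀX)` may be unbounded: then `Fop` takes the junk value
-- `sSup = 0`, for which `0 ≤ Fop` is still correct, the supremum being `+∞`.
theorem statement_1_general
    {n m r : ℕ} {Ω : Set (EuclideanSpace ℝ (Fin n))}
    (hΩo : IsOpen Ω) (hΩbdd : Bornology.IsBounded Ω)
    {A : Set (Fin m → ℝ)} (hAne : A.Nonempty)
    {b : EuclideanSpace ℝ (Fin n) → (Fin m → ℝ) → EuclideanSpace ℝ (Fin n)}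
    {σ : EuclideanSpace ℝ (Fin n) → (Fin m → ℝ) → Matrix (Fin n) (Fin r) ℝ}
    {δ₀ : ℝ} (hδ₀ : 0 < δ₀)
    {Dd : EuclideanSpace ℝ (Fin n) → EuclideanSpace ℝ (Fin n)}
    {D2d : EuclideanSpace ℝ (Fin n) → Matrix (Fin n) (Fin n) ℝ}
    (hDd : ∀ x, |sdist Ω x| < δ₀ → HasGradientAt (sdist Ω) (Dd x) x)
    (hDdnorm : ∀ x, |sdist Ω x| < δ₀ → ‖Dd x‖ = 1)
    (hD2d : ∀ x, |sdist Ω x| < δ₀ →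
      HasFDerivAt Dd (LinearMap.toContinuousLinearMap (Matrix.toEuclideanLin (D2d x))) x)
    {β B : ℝ}
    (hreg2 : ∀ x ∈ closure Ω, ∀ y ∈ closure Ω, ∀ α ∈ A,
      mnorm (σ x α - σ y α) ≤ B * ‖x - y‖ ^ β)
    (hinv : ∃ δ > (0 : ℝ), ∃ k > (0 : ℝ), ∃ γ : ℝ, γ < 2 * β - 1 ∧
      ∀ z ∈ frontier Ω, ∀ α ∈ A, sigmaT (σ z α) (Dd z) = 0 ∧
        ∀ x ∈ Ω, sdist Ω x < δ →
          k * sdist Ω x ^ γ ≤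
            ⟪b x α, Dd x⟫_ℝ + Matrix.trace (σ x α * (σ x α)ᵀ * D2d x))
    (hSMinP : StrongMinimumPrinciple (Fop A b σ) Ω)
    {v : EuclideanSpace ℝ (Fin n) → ℝ} (hv : IsViscositySupersolution (Fop A b σ) Ω v)
    (hgrowth : ∀ ε > (0 : ℝ), ∃ δ > 0, ∀ x ∈ Ω, sdist Ω x < δ → ε * Real.log (sdist Ω x) ≤ v x) :
    ∀ x ∈ Ω, ∀ y ∈ Ω, v x = v y := by
  intro x₀ hx₀
  rcases eq_or_ne Ω Set.univ with rfl | hne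
  · have : Subsingleton (EuclideanSpace ℝ (Fin n)) := not_nontrivial_iff_subsingleton.1 fun _ =>
      NormedSpace.unbounded_univ ℝ (EuclideanSpace ℝ (Fin n)) hΩbdd
    exact fun y _ => congrArg v (Subsingleton.elim x₀ y)
  obtain ⟨δ, hδ, k, hk, γ, hγ, hinv⟩ := hinv
  obtain ⟨z₀, hz₀, -⟩ := exists_mem_frontier_sdist_eq_dist hne hx₀
  obtain ⟨s, hs, hsδ₀, hstrict⟩ := exists_forall_Fop_const_mul_log_sdist_neg hΩo hne hAne hδ₀
    hDd hDdnorm hreg2 hδ hk hγ (fun z hz α hα => (hinv z hz α hα).1)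
    fun x hx hxδ α hα => (hinv z₀ hz₀ α hα).2 x hx hxδ
  have hpos : ∀ x ∈ Ω, 0 < sdist Ω x := fun x hx => sdist_pos hΩo hne hx
  have hlogmin : ∀ ε > 0, ∃ x ∈ {x ∈ Ω | s ≤ sdist Ω x},
      IsMinOn (fun x => v x - ε * Real.log (sdist Ω x)) Ω x := by
    intro ε hε
    obtain ⟨x, hx, hmin⟩ := exists_isMinOn_sub_mul_log ⟨x₀, hx₀⟩ (continuous_sdist Ω).continuousOn
      hpos (fun _ => isCompact_setOf_le_sdist hΩbdd) hv.lowerSemicontinuousOn hε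
      (hgrowth (ε / 2) (half_pos hε))
    refine ⟨x, ⟨hx, not_lt.1 fun hxs => (hstrict x hx hxs ε hε).not_ge ?_⟩, hmin⟩
    have hxδ₀ : |sdist Ω x| < δ₀ := by rw [abs_of_pos (hpos x hx)]; exact hxs.trans_le hsδ₀
    have hT := toContinuousLinearMap_toEuclideanLin (D2d x) ▸ hD2d x hxδ₀
    have hlog := hasHessianAt_const_mul_log_sdist hDd hT hxδ₀ (hpos x hx).ne' ε
    simpa only using hv.nonneg_of_isLocalMinOn hx hlog hmin.localize
  obtain ⟨x, hx, hmin⟩ := exists_isMinOn_of_forall_isMinOn_sub_mul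
    (isCompact_setOf_le_sdist hΩbdd hs) (hv.lowerSemicontinuousOn.mono (Set.sep_subset _ _))
    ((continuous_sdist Ω).continuousOn.log fun x hx => (hpos x hx.1).ne') hlogmin
  exact hSMinP v hv ⟨x, hx.1, fun _ => (hmin ·)⟩ x₀ hx₀

theorem statement_1
    {n m r : ℕ} (Ω : Set (EuclideanSpace ℝ (Fin n)))
    (hΩo : IsOpen Ω) (hΩconn : IsConnected Ω) (hΩbdd : Bornology.IsBounded Ω)
    (A : Set (Fin m → ℝ)) (hA : IsClosed A) (hAne : A.Nonempty)
    (b : EuclideanSpace ℝ (Fin n) → (Fin m → ℝ) → EuclideanSpace ℝ (Fin n))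
    (σ : EuclideanSpace ℝ (Fin n) → (Fin m → ℝ) → Matrix (Fin n) (Fin r) ℝ)
    (hbBdd : ∃ C, ∀ x ∈ closure Ω, ∀ α ∈ A, ‖b x α‖ ≤ C)
    (hσBdd : ∃ C, ∀ x ∈ closure Ω, ∀ α ∈ A, mnorm (σ x α) ≤ C)
    (hbCont : ContinuousOn (fun q : EuclideanSpace ℝ (Fin n) × (Fin m → ℝ) => b q.1 q.2)
      (closure Ω ×ˢ A))
    (hσCont : ContinuousOn (fun q : EuclideanSpace ℝ (Fin n) × (Fin m → ℝ) => σ q.1 q.2)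
      (closure Ω ×ˢ A))
    (δ₀ : ℝ) (hδ₀ : 0 < δ₀)
    (Dd : EuclideanSpace ℝ (Fin n) → EuclideanSpace ℝ (Fin n))
    (D2d : EuclideanSpace ℝ (Fin n) → Matrix (Fin n) (Fin n) ℝ)
    (hDd : ∀ x, |sdist Ω x| < δ₀ → HasGradientAt (sdist Ω) (Dd x) x)
    (hDdnorm : ∀ x, |sdist Ω x| < δ₀ → ‖Dd x‖ = 1)
    (hD2d : ∀ x, |sdist Ω x| < δ₀ →
      HasFDerivAt Dd (LinearMap.toContinuousLinearMap (Matrix.toEuclideanLin (D2d x))) x)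
    (hD2dCont : ContinuousOn D2d {x | |sdist Ω x| < δ₀})
    (ω : ℝ → ℝ) (hω0 : ω 0 = 0) (hωcont : ContinuousAt ω 0) (hωnn : ∀ s, 0 ≤ ω s)
    (hreg22 : ∀ x ∈ closure Ω, ∀ y ∈ closure Ω, ∀ α ∈ A, ‖b x α - b y α‖ ≤ ω ‖x - y‖)
    (β B : ℝ) (hβlow : 1 / 2 < β) (hβhigh : β ≤ 1) (hB : 0 < B)
    (hreg2 : ∀ x ∈ closure Ω, ∀ y ∈ closure Ω, ∀ α ∈ A,
      mnorm (σ x α - σ y α) ≤ B * ‖x - y‖ ^ β)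
    (hinv : ∃ δ > (0 : ℝ), ∃ k > (0 : ℝ), ∃ γ : ℝ, γ < 2 * β - 1 ∧
      ∀ z ∈ frontier Ω, ∀ α ∈ A, sigmaT (σ z α) (Dd z) = 0 ∧
        ∀ x ∈ Ω, sdist Ω x < δ →
          k * sdist Ω x ^ γ ≤
            ⟪b x α, Dd x⟫_ℝ + Matrix.trace (σ x α * (σ x α)ᵀ * D2d x))
    (hSMinP : ∀ w : EuclideanSpace ℝ (Fin n) → ℝ, LowerSemicontinuousOn w Ω →
      (∀ x ∈ Ω, ∀ qZ ∈ J2minus Ω w x, 0 ≤ Fop A b σ x qZ.1 qZ.2) →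
      (∃ x₀ ∈ Ω, ∀ x ∈ Ω, w x₀ ≤ w x) → ∀ x ∈ Ω, ∀ y ∈ Ω, w x = w y)
    (v : EuclideanSpace ℝ (Fin n) → ℝ) (hv : LowerSemicontinuousOn v Ω)
    (hvsuper : ∀ x ∈ Ω, ∀ qZ ∈ J2minus Ω v x, 0 ≤ Fop A b σ x qZ.1 qZ.2)
    (hgrowth : ∀ ε > (0 : ℝ), ∃ δ, 0 < δ ∧ δ < 1 ∧
      ∀ x ∈ Ω, sdist Ω x < δ → -(ε * (-Real.log (sdist Ω x))) ≤ v x) :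
    ∀ x ∈ Ω, ∀ y ∈ Ω, v x = v y := by
  exact statement_1_general hΩo hΩbdd hAne hδ₀ hDd hDdnorm hD2d hreg2 hinv
    (fun w hw hmin => hSMinP w hw.lowerSemicontinuousOn hw.nonneg hmin) ⟨hv, hvsuper⟩
    fun ε hε => let ⟨δ, hδ, _, h⟩ := hgrowth ε hε; ⟨δ, hδ, by simpa using h⟩
end
end

section
/- Let Ω ⊂ ℝⁿ be a bounded connected open set (no boundary regularity assumed) and d(x) := dist(x, ∂Ω) for x ∈ Ω. Assume b and σ are Lipschitz continuous in x uniformly in α with constant B (i.e. (reg22) with ω(r) = Br and (reg2) with β = 1); assume that every x̄ ∈ ∂Ω has an open neighborhood U, a control ᾱ ∈ A and k > 0 satisfying (d_subsol) and (sigma_perp); and assume F satisfies the Strong Maximum Principle in Ω. If u : Ω → ℝ is upper semicontinuous, is a viscosity subsolution of F[u]=0 in Ω, and satisfies limsup_{x→∂Ω} u(x)/(−log d(x)) ≤ 0, then u is constant. -/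
open scoped InnerProductSpace Matrix
open Filter

noncomputable section

open Topology

/-
It suffices that `u` attains its maximum in `Ω`, and for this that `u + lam * log d` has no local
maximum in a boundary strip independent of `lam > 0`: by the growth condition it has a global
maximum in `Ω`, which then lies in a fixed compact set, and `lam → 0` gives a maximum of `u`.

At a local maximum `a` of `u + lam * log d` the test function `-lam * log d` has to be made twice
differentiable. The function `(|x|² - d(x)²) / 2` is a supremum of affine functions, hence convex
and Lipschitz. Its Moreau envelope is `C^{1,1}`, and averaging it over small balls yields a
test function that is twice differentiable everywhere and whose derivatives are averages of the
derivatives of the envelope. The latter are, where they exist (almost everywhere), superjets of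
`d²` at nearby points, so `(d_subsol)` and `(sigma_perp)` pass to the regularized function with
small errors; this replaces Jensen's lemma. Since `σ` is Lipschitz and tangential at the
projections, `|σᵀ Dd| ≤ B d`, so the second-order term of `log d` is bounded while the
first-order one is at least `k / d`.
-/

section Jets

variable {E : Type*} [NormedAddCommGroup E] [InnerProductSpace ℝ E]

/-- The pair `(p, T)` belongs to the second-order superjet of `u` at `x`. Hessians are encoded as
continuous linear maps, which need not be symmetric since only their quadratic forms matter, and
`(p, T)` belongs to the subjet of `u` when `IsSuperjet (-u) x (-p) (-T)`. -/
def IsSuperjet (u : E → ℝ) (x p : E) (T : E →L[ℝ] E) : Prop :=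
  ∀ ε > 0, ∀ᶠ v in 𝓝 (0 : E), u (x + v) - u x - ⟪p, v⟫_ℝ - 1 / 2 * ⟪T v, v⟫_ℝ ≤ ε * ‖v‖ ^ 2

theorem IsSuperjet.of_eventually_le {u w : E → ℝ} {x y p : E} {T : E →L[ℝ] E}
    (hu : IsSuperjet u x p T) (h : ∀ᶠ v in 𝓝 0, w (y + v) - w y ≤ u (x + v) - u x) :
    IsSuperjet w y p T := fun ε hε ↦ by
  filter_upwards [hu ε hε, h] with v hv hle
  linarith

variable [CompleteSpace E]

/-- Second-order differentiability of `ψ` at `x` with Hessian `T`, witnessed by a gradient field `q`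
of `ψ` near `x` that is differentiable at `x`. -/
structure HasHessianAt_s9 (ψ : E → ℝ) (q : E → E) (T : E →L[ℝ] E) (x : E) : Prop where
  hasGradientAt : ∀ᶠ y in 𝓝 x, HasGradientAt ψ (q y) y
  hasFDerivAt : HasFDerivAt q T x

namespace HasHessianAt_s9

variable {ψ φ : E → ℝ} {q q' : E → E} {T T' : E →L[ℝ] E} {x : E}

protected theorem sub (h : HasHessianAt_s9 ψ q T x) (h' : HasHessianAt_s9 φ q' T' x) :
    HasHessianAt_s9 (fun y ↦ ψ y - φ y) (fun y ↦ q y - q' y) (T - T') x where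
  hasGradientAt := by
    filter_upwards [h.hasGradientAt, h'.hasGradientAt] with y hy hy'
    rw [hasGradientAt_iff_hasFDerivAt, map_sub]
    exact hy.hasFDerivAt.sub hy'.hasFDerivAt
  hasFDerivAt := h.hasFDerivAt.sub h'.hasFDerivAt

protected theorem const_mul (h : HasHessianAt_s9 ψ q T x) (c : ℝ) :
    HasHessianAt_s9 (fun y ↦ c * ψ y) (fun y ↦ c • q y) (c • T) x where
  hasGradientAt := by
    filter_upwards [h.hasGradientAt] with y hy
    rw [hasGradientAt_iff_hasFDerivAt, map_smul]
    exact hy.hasFDerivAt.const_mul c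
  hasFDerivAt := h.hasFDerivAt.const_smul c

protected theorem log (h : HasHessianAt_s9 ψ q T x) (hx : 0 < ψ x) :
    HasHessianAt_s9 (fun y ↦ Real.log (ψ y)) (fun y ↦ (ψ y)⁻¹ • q y)
      ((ψ x)⁻¹ • T - (ψ x ^ 2)⁻¹ • InnerProductSpace.rankOne ℝ (q x) (q x)) x where
  hasGradientAt := by
    have hpos := h.hasGradientAt.self_of_nhds.hasFDerivAt.continuousAt.eventually_ne hx.ne'
    filter_upwards [h.hasGradientAt, hpos] with y hy hne
    rw [hasGradientAt_iff_hasFDerivAt, map_smul]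
    exact hy.hasFDerivAt.log hne
  hasFDerivAt := by
    have hψ := h.hasGradientAt.self_of_nhds.hasFDerivAt
    have hinv := (hasDerivAt_inv hx.ne').comp_hasFDerivAt x hψ
    refine (hinv.smul h.hasFDerivAt).congr_fderiv ?_
    ext v
    simp [sub_eq_add_neg, mul_smul]

theorem norm_sub_sq (a x : E) :
    HasHessianAt_s9 (fun y ↦ ‖y - a‖ ^ 2) (fun y ↦ (2 : ℝ) • (y - a))
      ((2 : ℝ) • ContinuousLinearMap.id ℝ E) x where
  hasGradientAt := Eventually.of_forall fun y ↦ by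
    rw [hasGradientAt_iff_hasFDerivAt]
    refine ((hasFDerivAt_id y).sub_const a).norm_sq.congr_fderiv ?_
    ext v
    simp
  hasFDerivAt := ((hasFDerivAt_id x).sub_const a).const_smul (2 : ℝ)

theorem hasDerivAt_taylorRemainder (x : E) {v : E} {s : ℝ}
    (h : HasGradientAt ψ (q (x + s • v)) (x + s • v)) :
    HasDerivAt (fun s : ℝ ↦ ψ (x + s • v) - s * ⟪q x, v⟫_ℝ - s ^ 2 / 2 * ⟪T v, v⟫_ℝ)
      ⟪q (x + s • v) - q x - T (s • v), v⟫_ℝ s := by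
  have hline : HasDerivAt (fun s : ℝ ↦ x + s • v) v s := by
    simpa using ((hasDerivAt_id s).smul_const v).const_add x
  have hψ := h.hasFDerivAt.comp_hasDerivAt s hline
  have hlin := (hasDerivAt_id s).mul_const ⟪q x, v⟫_ℝ
  have hquad := (((hasDerivAt_id s).pow 2).div_const 2).mul_const ⟪T v, v⟫_ℝ
  refine ((hψ.sub hlin).sub hquad).congr_deriv ?_
  simp [inner_sub_left, inner_smul_left]

theorem taylor (h : HasHessianAt_s9 ψ q T x) {ε : ℝ} (hε : 0 < ε) :
    ∀ᶠ v in 𝓝 0, |ψ (x + v) - ψ x - ⟪q x, v⟫_ℝ - 1 / 2 * ⟪T v, v⟫_ℝ| ≤ ε * ‖v‖ ^ 2 := by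
  have hq : ∀ᶠ v in 𝓝 0, ‖q (x + v) - q x - T v‖ ≤ ε * ‖v‖ :=
    (hasFDerivAt_iff_isLittleO_nhds_zero.1 h.hasFDerivAt).bound hε
  have hψ : ∀ᶠ v in 𝓝 0, HasGradientAt ψ (q (x + v)) (x + v) := by
    have hlim : Tendsto (x + ·) (𝓝 0) (𝓝 x) := (map_add_left_nhds_zero x).le
    exact hlim.eventually h.hasGradientAt
  obtain ⟨δ, hδ, hball⟩ := Metric.eventually_nhds_iff_ball.1 (hq.and hψ)
  filter_upwards [Metric.ball_mem_nhds (0 : E) hδ] with v hv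
  have hseg : ∀ s ∈ Set.Icc (0 : ℝ) 1, s • v ∈ Metric.ball (0 : E) δ := fun s hs ↦ by
    rw [mem_ball_zero_iff, norm_smul, Real.norm_of_nonneg hs.1]
    exact (mul_le_of_le_one_left (norm_nonneg v) hs.2).trans_lt (mem_ball_zero_iff.1 hv)
  have hderiv : ∀ s ∈ Set.Icc (0 : ℝ) 1, _ := fun s hs ↦
    (hasDerivAt_taylorRemainder (T := T) x (hball _ (hseg s hs)).2).hasDerivWithinAt
      (s := Set.Icc (0 : ℝ) 1)
  have hbound : ∀ s ∈ Set.Ico (0 : ℝ) 1,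
      ‖⟪q (x + s • v) - q x - T (s • v), v⟫_ℝ‖ ≤ ε * ‖v‖ ^ 2 := fun s hs ↦ by
    have hs' := Set.Ico_subset_Icc_self hs
    calc _ ≤ ‖q (x + s • v) - q x - T (s • v)‖ * ‖v‖ := norm_inner_le_norm _ _
      _ ≤ ε * ‖s • v‖ * ‖v‖ := by gcongr; exact (hball _ (hseg s hs')).1
      _ ≤ ε * ‖v‖ * ‖v‖ := by
          gcongr
          rw [norm_smul, Real.norm_of_nonneg hs.1]
          exact mul_le_of_le_one_left (norm_nonneg v) hs'.2
      _ = ε * ‖v‖ ^ 2 := by ring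
  have hmean := norm_image_sub_le_of_norm_deriv_le_segment_01' hderiv hbound
  simp only [one_smul, zero_smul, add_zero, one_mul, zero_mul, one_pow, Real.norm_eq_abs] at hmean
  convert hmean using 2
  ring

theorem isSuperjet (h : HasHessianAt_s9 ψ q T x) : IsSuperjet ψ x (q x) T := fun _ hε ↦
  (h.taylor hε).mono fun _ hv ↦ (abs_le.1 hv).2

theorem isSubjet (h : HasHessianAt_s9 ψ q T x) :
    IsSuperjet (fun y ↦ -ψ y) x (-q x) (-T) := by
  simpa using (h.const_mul (-1)).isSuperjet

theorem isSuperjet_of_isLocalMax {u : E → ℝ} (h : HasHessianAt_s9 ψ q T x)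
    (hmax : IsLocalMax (fun y ↦ u y - ψ y) x) : IsSuperjet u x (q x) T := by
  have hlim : Tendsto (x + ·) (𝓝 0) (𝓝 x) := (map_add_left_nhds_zero x).le
  refine h.isSuperjet.of_eventually_le ((hlim.eventually hmax).mono fun v hv ↦ ?_)
  linarith

end HasHessianAt_s9

end Jets

section DiffusionOperator

variable {E ι : Type*} [NormedAddCommGroup E] [InnerProductSpace ℝ E] [Fintype ι]

/-- The second-order operator `b · p + tr (σ σᵀ T)`, where `s j` is the `j`-th column of `σ`. -/
def diffusionOp (b : E) (s : ι → E) (p : E) (T : E →L[ℝ] E) : ℝ :=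
  ⟪b, p⟫_ℝ + ∑ j, ⟪T (s j), s j⟫_ℝ

theorem diffusionOp_sub (b : E) (s : ι → E) (p p' : E) (T T' : E →L[ℝ] E) :
    diffusionOp b s (p - p') (T - T') = diffusionOp b s p T - diffusionOp b s p' T' := by
  simp only [diffusionOp, inner_sub_right, sub_apply, inner_sub_left,
    Finset.sum_sub_distrib]
  ring

theorem diffusionOp_smul (b : E) (s : ι → E) (c : ℝ) (p : E) (T : E →L[ℝ] E) :
    diffusionOp b s (c • p) (c • T) = c * diffusionOp b s p T := by
  simp [diffusionOp, inner_smul_left, inner_smul_right, mul_add, Finset.mul_sum]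

theorem diffusionOp_rankOne (b : E) (s : ι → E) (q : E) :
    diffusionOp b s 0 (InnerProductSpace.rankOne ℝ q q) = ∑ j, ⟪s j, q⟫_ℝ ^ 2 := by
  simp [diffusionOp, inner_smul_left, sq, real_inner_comm]

theorem abs_inner_map_self_le (T : E →L[ℝ] E) {v : E} {κ : ℝ} (hv : ‖v‖ ≤ κ) :
    |⟪T v, v⟫_ℝ| ≤ ‖T‖ * κ ^ 2 :=
  calc _ ≤ ‖T‖ * ‖v‖ * ‖v‖ := (abs_real_inner_le_norm _ _).trans (by gcongr; exact T.le_opNorm _)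
    _ ≤ ‖T‖ * κ ^ 2 := by rw [mul_assoc, ← sq]; gcongr

theorem abs_diffusionOp_le {b p : E} {s : ι → E} {T : E →L[ℝ] E} {κ : ℝ} (hs : ∀ j, ‖s j‖ ≤ κ) :
    |diffusionOp b s p T| ≤ ‖b‖ * ‖p‖ + Fintype.card ι * (‖T‖ * κ ^ 2) := by
  have hsum := (Finset.abs_sum_le_sum_abs _ _).trans
    (Finset.sum_le_card_nsmul Finset.univ _ _ fun j _ ↦ abs_inner_map_self_le T (hs j))
  rw [Finset.card_univ, nsmul_eq_mul] at hsum
  exact (abs_add_le _ _).trans (add_le_add (abs_real_inner_le_norm b p) hsum)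

theorem inner_map_add_le {T : E →L[ℝ] E} (hT : ∀ v, 0 ≤ ⟪T v, v⟫_ℝ) {η : ℝ} (hη : 0 < η)
    (v w : E) :
    ⟪T (v + w), v + w⟫_ℝ ≤ (1 + η) * ⟪T v, v⟫_ℝ + (1 + η⁻¹) * ⟪T w, w⟫_ℝ := by
  have hnonneg := mul_nonneg (inv_nonneg.2 hη.le) (hT (η • v - w))
  have hexpand : η⁻¹ * ⟪T (η • v - w), η • v - w⟫_ℝ
      = η * ⟪T v, v⟫_ℝ + η⁻¹ * ⟪T w, w⟫_ℝ - ⟪T v, w⟫_ℝ - ⟪T w, v⟫_ℝ := by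
    simp only [map_sub, map_smul, inner_sub_left, inner_sub_right, real_inner_smul_left,
      real_inner_smul_right]
    field_simp
    ring
  rw [map_add, inner_add_left, inner_add_right, inner_add_right]
  linarith

theorem diffusionOp_le {b b' p : E} {s s' : ι → E} {T : E →L[ℝ] E} {η κ : ℝ}
    (hT : ∀ v, 0 ≤ ⟪T v, v⟫_ℝ) (hη : 0 < η) (hs : ∀ j, ‖s' j - s j‖ ≤ κ) :
    diffusionOp b' s' p T ≤ (1 + η) * diffusionOp b s p T
      + (η * ‖b‖ + ‖b' - b‖) * ‖p‖ + (1 + η⁻¹) * (Fintype.card ι * (‖T‖ * κ ^ 2)) := by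
  have hdrift : ⟪b', p⟫_ℝ ≤ (1 + η) * ⟪b, p⟫_ℝ + (η * ‖b‖ + ‖b' - b‖) * ‖p‖ := by
    have hb := neg_le_of_abs_le (abs_real_inner_le_norm b p)
    have hb' := le_of_abs_le (abs_real_inner_le_norm (b' - b) p)
    rw [inner_sub_left] at hb'
    linarith [mul_le_mul_of_nonneg_left hb hη.le]
  have hcol (j : ι) :
      ⟪T (s' j), s' j⟫_ℝ ≤ (1 + η) * ⟪T (s j), s j⟫_ℝ + (1 + η⁻¹) * (‖T‖ * κ ^ 2) := by
    have hyoung := inner_map_add_le hT hη (s j) (s' j - s j)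
    have hbound := le_of_abs_le (abs_inner_map_self_le T (hs j))
    rw [add_sub_cancel] at hyoung
    exact hyoung.trans (by gcongr)
  have hsum := Finset.sum_le_sum fun j (_ : j ∈ Finset.univ) ↦ hcol j
  rw [Finset.sum_add_distrib, ← Finset.mul_sum, Finset.sum_const, Finset.card_univ,
    nsmul_eq_mul] at hsum
  simp only [diffusionOp]
  linarith

end DiffusionOperator

section ConvexSmooth

variable {E : Type*} [NormedAddCommGroup E] [InnerProductSpace ℝ E]

/-- `g` is convex and `L`-smooth with gradient field `p`. Both properties are encoded by the
two-sided quadratic bound on the error of the tangent approximation. -/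
structure IsConvexSmooth (L : ℝ) (g : E → ℝ) (p : E → E) : Prop where
  inner_le : ∀ x v, ⟪p x, v⟫_ℝ ≤ g (x + v) - g x
  sub_le : ∀ x v, g (x + v) - g x ≤ ⟪p x, v⟫_ℝ + L / 2 * ‖v‖ ^ 2

namespace IsConvexSmooth

variable {L : ℝ} {g : E → ℝ} {p : E → E}

-- Compare `g` at `y + L⁻¹ • (p x - p y)` with its tangent at `x` and its parabola at `y`.
theorem inner_add_norm_sq_le (h : IsConvexSmooth L g p) (hL : 0 < L) (x y : E) :
    ⟪p x, y - x⟫_ℝ + L⁻¹ / 2 * ‖p x - p y‖ ^ 2 ≤ g y - g x := by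
  set e := p x - p y with he
  have hlow := h.inner_le x (y - x + L⁻¹ • e)
  have hupp := h.sub_le y (L⁻¹ • e)
  rw [← add_assoc, add_sub_cancel, inner_add_right] at hlow
  have hinner : ⟪p x, L⁻¹ • e⟫_ℝ - ⟪p y, L⁻¹ • e⟫_ℝ = L⁻¹ * ‖e‖ ^ 2 := by
    rw [← inner_sub_left, ← he, real_inner_smul_right, real_inner_self_eq_norm_sq]
  have hnorm : L / 2 * ‖L⁻¹ • e‖ ^ 2 = L⁻¹ / 2 * ‖e‖ ^ 2 := by
    rw [norm_smul, Real.norm_of_nonneg (inv_nonneg.2 hL.le)]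
    field_simp
  linarith

theorem lipschitzWith (h : IsConvexSmooth L g p) (hL : 0 < L) : LipschitzWith L.toNNReal p := by
  refine LipschitzWith.of_dist_le' fun x y ↦ ?_
  have hxy := h.inner_add_norm_sq_le hL x y
  have hyx := h.inner_add_norm_sq_le hL y x
  have hcs := real_inner_le_norm (p x - p y) (x - y)
  rw [norm_sub_rev] at hyx
  have hcoco : L⁻¹ * ‖p x - p y‖ ^ 2 ≤ ‖p x - p y‖ * ‖x - y‖ := by
    have hsum : ⟪p x, y - x⟫_ℝ + ⟪p y, x - y⟫_ℝ = -⟪p x - p y, x - y⟫_ℝ := by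
      rw [← neg_sub x y, inner_neg_right, inner_sub_left]
      ring
    linarith
  rw [dist_eq_norm, dist_eq_norm]
  rcases (norm_nonneg (p x - p y)).eq_or_lt with hzero | hpos
  · rw [← hzero]
    positivity
  · have hdiv : L⁻¹ * ‖p x - p y‖ ≤ ‖x - y‖ :=
      le_of_mul_le_mul_right (by linarith) hpos
    rwa [inv_mul_le_iff₀ hL] at hdiv

theorem hasGradientAt [CompleteSpace E] (h : IsConvexSmooth L g p) (x : E) :
    HasGradientAt g (p x) x := by
  rw [hasGradientAt_iff_isLittleO_nhds_zero]
  have hquad : (fun v ↦ g (x + v) - g x - ⟪p x, v⟫_ℝ) =O[𝓝 0] fun v : E ↦ ‖v‖ ^ 2 := by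
    refine .of_bound (L / 2) (Eventually.of_forall fun v ↦ ?_)
    rw [Real.norm_of_nonneg (sub_nonneg.2 (h.inner_le x v)), Real.norm_of_nonneg (by positivity)]
    linarith [h.sub_le x v]
  exact hquad.trans_isLittleO (Asymptotics.isLittleO_norm_pow_id one_lt_two)

theorem hasHessianAt [CompleteSpace E] (h : IsConvexSmooth L g p) {x : E}
    (hp : DifferentiableAt ℝ p x) : HasHessianAt_s9 g p (fderiv ℝ p x) x :=
  ⟨Eventually.of_forall h.hasGradientAt, hp.hasFDerivAt⟩

theorem inner_sub_nonneg (h : IsConvexSmooth L g p) (x v : E) :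
    0 ≤ ⟪p (x + v) - p x, v⟫_ℝ := by
  have hx := h.inner_le x v
  have hy := h.inner_le (x + v) (-v)
  rw [add_neg_cancel_right, inner_neg_right] at hy
  rw [inner_sub_left]
  linarith

theorem inner_fderiv_nonneg (h : IsConvexSmooth L g p) {x : E} (hp : DifferentiableAt ℝ p x)
    (v : E) : 0 ≤ ⟪fderiv ℝ p x v, v⟫_ℝ := by
  have hlim := hp.hasFDerivAt.hasLineDerivAt v |>.tendsto_slope_zero_right
  refine ge_of_tendsto (hlim.inner tendsto_const_nhds) ?_
  filter_upwards [self_mem_nhdsWithin] with t (ht : 0 < t)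
  have hmono := h.inner_sub_nonneg x (t • v)
  rw [real_inner_smul_right] at hmono
  simpa [real_inner_smul_left] using
    mul_nonneg (inv_nonneg.2 ht.le) (nonneg_of_mul_nonneg_right hmono ht)

end IsConvexSmooth

end ConvexSmooth

section MoreauEnvelope

variable {E : Type*} [NormedAddCommGroup E]

/-- The proximal point of `x`: a minimiser of `y ↦ h y + ‖x - y‖² / (2τ)`, chosen arbitrarily, and a
junk value when there is none. -/
def prox (τ : ℝ) (h : E → ℝ) (x : E) : E :=
  Classical.epsilon fun y ↦ ∀ z, h y + ‖x - y‖ ^ 2 / (2 * τ) ≤ h z + ‖x - z‖ ^ 2 / (2 * τ)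

/-- The Moreau envelope of `h` with parameter `τ`, a `C^{1,1}` approximation of a convex `h`. -/
def moreauEnvelope (τ : ℝ) (h : E → ℝ) (x : E) : ℝ := ⨅ y, h y + ‖x - y‖ ^ 2 / (2 * τ)

variable [ProperSpace E] {h : E → ℝ} {R : NNReal} {τ : ℝ}

theorem prox_spec (hR : LipschitzWith R h) (hτ : 0 < τ) (x z : E) :
    h (prox τ h x) + ‖x - prox τ h x‖ ^ 2 / (2 * τ) ≤ h z + ‖x - z‖ ^ 2 / (2 * τ) := by
  refine Classical.epsilon_spec (p := fun y ↦
    ∀ z, h y + ‖x - y‖ ^ 2 / (2 * τ) ≤ h z + ‖x - z‖ ^ 2 / (2 * τ)) ?_ z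
  have hcont : Continuous fun y ↦ h y + ‖x - y‖ ^ 2 / (2 * τ) := by
    have := hR.continuous
    fun_prop
  refine hcont.exists_forall_le' x ?_
  filter_upwards [(isCompact_closedBall x (2 * τ * R)).compl_mem_cocompact] with y hy
  have hfar : 2 * τ * R < ‖x - y‖ := by
    simpa [dist_eq_norm'] using hy
  have hlip := (le_abs_self _).trans (hR.norm_sub_le x y)
  have hquad : R * ‖x - y‖ ≤ ‖x - y‖ ^ 2 / (2 * τ) := by
    rw [le_div_iff₀ (by positivity)]
    nlinarith [norm_nonneg (x - y)]
  rw [sub_self, norm_zero]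
  norm_num
  linarith

theorem moreauEnvelope_eq (hR : LipschitzWith R h) (hτ : 0 < τ) (x : E) :
    moreauEnvelope τ h x = h (prox τ h x) + ‖x - prox τ h x‖ ^ 2 / (2 * τ) :=
  IsLeast.csInf_eq ⟨⟨_, rfl⟩, Set.forall_mem_range.2 (prox_spec hR hτ x)⟩

theorem moreauEnvelope_le (hR : LipschitzWith R h) (hτ : 0 < τ) (x y : E) :
    moreauEnvelope τ h x ≤ h y + ‖x - y‖ ^ 2 / (2 * τ) :=
  (moreauEnvelope_eq hR hτ x).trans_le (prox_spec hR hτ x y)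

theorem moreauEnvelope_add_sub_le (hR : LipschitzWith R h) (hτ : 0 < τ) (x v : E) :
    moreauEnvelope τ h (x + v) - moreauEnvelope τ h x
      ≤ h (prox τ h x + v) - h (prox τ h x) := by
  have hle := moreauEnvelope_le hR hτ (x + v) (prox τ h x + v)
  rw [add_sub_add_right_eq_sub] at hle
  rw [moreauEnvelope_eq hR hτ x]
  linarith

end MoreauEnvelope

section MoreauGradient

variable {E : Type*} [NormedAddCommGroup E] [InnerProductSpace ℝ E]

/-- `p` is a subgradient of the (typically convex) function `h` at `x`. -/
def IsSubgradient (h : E → ℝ) (x p : E) : Prop := ∀ y, h x + ⟪p, y - x⟫_ℝ ≤ h y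

/-- The gradient of the Moreau envelope of a convex function. -/
def moreauGradient (τ : ℝ) (h : E → ℝ) (x : E) : E := τ⁻¹ • (x - prox τ h x)

variable {h : E → ℝ} {R : NNReal} {τ : ℝ}

theorem IsSubgradient.norm_le {x p : E} (hp : IsSubgradient h x p) (hR : LipschitzWith R h) :
    ‖p‖ ≤ R := by
  have hsub := hp (x + p)
  have hlip := (le_abs_self _).trans (hR.norm_sub_le (x + p) x)
  rw [add_sub_cancel_left] at hlip hsub
  rw [real_inner_self_eq_norm_sq] at hsub
  rcases (norm_nonneg p).eq_or_lt with hzero | hpos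
  · rw [← hzero]
    exact R.2
  · exact le_of_mul_le_mul_right (by linarith) hpos

theorem sub_prox (hτ : 0 < τ) (x : E) : x - prox τ h x = τ • moreauGradient τ h x := by
  rw [moreauGradient, smul_inv_smul₀ hτ.ne']

variable [ProperSpace E]

theorem isSubgradient_moreauGradient (hc : ConvexOn ℝ Set.univ h) (hR : LipschitzWith R h)
    (hτ : 0 < τ) (x : E) : IsSubgradient h (prox τ h x) (moreauGradient τ h x) := by
  intro y
  set P := prox τ h x
  have hsegment : ∀ t ∈ Set.Ioc (0 : ℝ) 1,
      h P + ⟪moreauGradient τ h x, y - P⟫_ℝ ≤ h y + t * (‖y - P‖ ^ 2 / (2 * τ)) := by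
    intro t ht
    have hmin := prox_spec hR hτ x (P + t • (y - P))
    have hconv : h (P + t • (y - P)) ≤ (1 - t) * h P + t * h y := by
      rw [show P + t • (y - P) = (1 - t) • P + t • y by module]
      exact hc.2 (Set.mem_univ P) (Set.mem_univ y) (sub_nonneg.2 ht.2) ht.1.le (by ring)
    have hsq : ‖x - (P + t • (y - P))‖ ^ 2 / (2 * τ)
        = ‖x - P‖ ^ 2 / (2 * τ) - t * ⟪moreauGradient τ h x, y - P⟫_ℝ
          + t * (t * (‖y - P‖ ^ 2 / (2 * τ))) := by
      rw [← sub_sub, norm_sub_sq_real, sub_prox hτ, real_inner_smul_right, real_inner_smul_left,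
        norm_smul t, Real.norm_of_nonneg ht.1.le]
      field_simp
    exact le_of_mul_le_mul_left (by linarith) ht.1
  have hlim : Tendsto (fun t ↦ h y + t * (‖y - P‖ ^ 2 / (2 * τ))) (𝓝[>] 0) (𝓝 (h y)) := by
    refine tendsto_nhdsWithin_of_tendsto_nhds ?_
    convert Continuous.tendsto (f := fun t ↦ h y + t * (‖y - P‖ ^ 2 / (2 * τ))) (by fun_prop) 0
    ring
  exact ge_of_tendsto hlim (eventually_of_mem (Ioc_mem_nhdsGT one_pos) hsegment)

theorem norm_moreauGradient_le (hc : ConvexOn ℝ Set.univ h) (hR : LipschitzWith R h)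
    (hτ : 0 < τ) (x : E) : ‖moreauGradient τ h x‖ ≤ R :=
  (isSubgradient_moreauGradient hc hR hτ x).norm_le hR

theorem norm_sub_prox_le (hc : ConvexOn ℝ Set.univ h) (hR : LipschitzWith R h) (hτ : 0 < τ)
    (x : E) : ‖x - prox τ h x‖ ≤ τ * R := by
  rw [sub_prox hτ, norm_smul, Real.norm_of_nonneg hτ.le]
  gcongr
  exact norm_moreauGradient_le hc hR hτ x

theorem isConvexSmooth_moreauEnvelope (hc : ConvexOn ℝ Set.univ h) (hR : LipschitzWith R h)
    (hτ : 0 < τ) : IsConvexSmooth τ⁻¹ (moreauEnvelope τ h) (moreauGradient τ h) where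
  inner_le x v := by
    set q := moreauGradient τ h x with hq
    set w := x + v - prox τ h (x + v) with hw
    have hsub := isSubgradient_moreauGradient hc hR hτ x (prox τ h (x + v))
    have hdisp : prox τ h (x + v) - prox τ h x = v - w + τ • q := by
      rw [hq, ← sub_prox hτ, hw]
      abel
    have hsquare : 0 ≤ ‖w - τ • q‖ ^ 2 / (2 * τ) := by positivity
    have hexpand : ‖w - τ • q‖ ^ 2 / (2 * τ)
        = ‖w‖ ^ 2 / (2 * τ) - ⟪q, w⟫_ℝ + τ / 2 * ‖q‖ ^ 2 := by
      rw [norm_sub_sq_real, real_inner_smul_right, norm_smul, Real.norm_of_nonneg hτ.le,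
        real_inner_comm w q]
      field_simp
    have hself : ‖τ • q‖ ^ 2 / (2 * τ) = τ / 2 * ‖q‖ ^ 2 := by
      rw [norm_smul, Real.norm_of_nonneg hτ.le]
      field_simp
    rw [hdisp, inner_add_right, inner_sub_right, real_inner_smul_right,
      real_inner_self_eq_norm_sq] at hsub
    rw [moreauEnvelope_eq hR hτ, moreauEnvelope_eq hR hτ, sub_prox hτ x, hself]
    linarith
  sub_le x v := by
    have hle := moreauEnvelope_le hR hτ (x + v) (prox τ h x)
    have hexpand : ‖x + v - prox τ h x‖ ^ 2 / (2 * τ)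
        = ‖x - prox τ h x‖ ^ 2 / (2 * τ) + ⟪moreauGradient τ h x, v⟫_ℝ + τ⁻¹ / 2 * ‖v‖ ^ 2 := by
      rw [add_sub_right_comm, norm_add_sq_real, moreauGradient, real_inner_smul_left]
      field_simp
    rw [moreauEnvelope_eq hR hτ x]
    linarith

theorem abs_moreauEnvelope_sub_le (hc : ConvexOn ℝ Set.univ h) (hR : LipschitzWith R h)
    (hτ : 0 < τ) (x : E) : |moreauEnvelope τ h x - h x| ≤ τ * R ^ 2 := by
  have hupp : moreauEnvelope τ h x ≤ h x := by simpa using moreauEnvelope_le hR hτ x x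
  have hprox : h (prox τ h x) ≤ moreauEnvelope τ h x := by
    rw [moreauEnvelope_eq hR hτ]
    exact le_add_of_nonneg_right (by positivity)
  have hlip : h x - h (prox τ h x) ≤ τ * R ^ 2 :=
    calc h x - h (prox τ h x) ≤ R * ‖x - prox τ h x‖ :=
          (le_abs_self _).trans (hR.norm_sub_le _ _)
      _ ≤ R * (τ * R) := by gcongr; exact norm_sub_prox_le hc hR hτ x
      _ = τ * R ^ 2 := by ring
  rw [abs_sub_comm, abs_of_nonneg (sub_nonneg.2 hupp)]
  linarith

theorem lipschitzWith_moreauGradient (hc : ConvexOn ℝ Set.univ h) (hR : LipschitzWith R h)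
    (hτ : 0 < τ) : LipschitzWith τ⁻¹.toNNReal (moreauGradient τ h) :=
  (isConvexSmooth_moreauEnvelope hc hR hτ).lipschitzWith (inv_pos.2 hτ)

theorem isSubjet_prox (hc : ConvexOn ℝ Set.univ h) (hR : LipschitzWith R h) (hτ : 0 < τ) {x : E}
    (hx : DifferentiableAt ℝ (moreauGradient τ h) x) :
    IsSuperjet (fun y ↦ -h y) (prox τ h x) (-moreauGradient τ h x)
      (-fderiv ℝ (moreauGradient τ h) x) := by
  refine ((isConvexSmooth_moreauEnvelope hc hR hτ).hasHessianAt hx).isSubjet.of_eventually_le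
    (Eventually.of_forall fun v ↦ ?_)
  linarith [moreauEnvelope_add_sub_le hR hτ x v]

end MoreauGradient

section Integral

open MeasureTheory

variable {E ι X : Type*} [NormedAddCommGroup E] [InnerProductSpace ℝ E] [Fintype ι]
  [MeasurableSpace X]

theorem integrable_inner_apply {μ : Measure X} {T : X → E →L[ℝ] E} (hT : Integrable T μ) (v : E) :
    Integrable (fun t ↦ ⟪T t v, v⟫_ℝ) μ :=
  (hT.apply_continuousLinearMap v).inner_const v

theorem integrable_diffusionOp {μ : Measure X} (b : E) (s : ι → E) {p : X → E}
    {T : X → E →L[ℝ] E} (hp : Integrable p μ) (hT : Integrable T μ) :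
    Integrable (fun t ↦ diffusionOp b s (p t) (T t)) μ :=
  (hp.const_inner b).add (integrable_finsetSum _ fun j _ ↦ integrable_inner_apply hT (s j))

theorem diffusionOp_integral [CompleteSpace E] {μ : Measure X} (b : E) (s : ι → E) {p : X → E}
    {T : X → E →L[ℝ] E} (hp : Integrable p μ) (hT : Integrable T μ) :
    diffusionOp b s (∫ t, p t ∂μ) (∫ t, T t ∂μ) = ∫ t, diffusionOp b s (p t) (T t) ∂μ := by
  have hcol (j : ι) := integrable_inner_apply hT (s j)
  simp only [diffusionOp]
  rw [integral_add (hp.const_inner b) (integrable_finsetSum _ fun j _ ↦ hcol j),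
    integral_inner hp, integral_finsetSum _ fun j _ ↦ hcol j]
  congr! 2 with j
  rw [ContinuousLinearMap.integral_apply hT, real_inner_comm,
    ← integral_inner (hT.apply_continuousLinearMap (s j))]
  simp only [real_inner_comm]

end Integral

section BallAverage

open MeasureTheory ProbabilityTheory

variable {E F : Type*} [NormedAddCommGroup E] [InnerProductSpace ℝ E] [FiniteDimensional ℝ E]
  [MeasurableSpace E] [BorelSpace E] [NormedAddCommGroup F]

variable (E) in
/-- The uniform probability measure on the ball of radius `τ` about the origin, used as a
mollifier. -/
def ballMeasure (τ : ℝ) : Measure E := cond volume (Metric.closedBall 0 τ)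

variable {τ : ℝ}

theorem isProbabilityMeasure_ballMeasure (hτ : 0 < τ) :
    IsProbabilityMeasure (ballMeasure E τ) :=
  cond_isProbabilityMeasure_of_finite (Metric.measure_closedBall_pos volume _ hτ).ne'
    measure_closedBall_lt_top.ne

theorem ae_norm_le_ballMeasure : ∀ᵐ t ∂ballMeasure E τ, ‖t‖ ≤ τ :=
  (ae_cond_mem Metric.isClosed_closedBall.measurableSet).mono fun _ ↦ mem_closedBall_zero_iff.1

theorem ae_add_ballMeasure {P : E → Prop} (hP : ∀ᵐ y, P y) (x : E) :
    ∀ᵐ t ∂ballMeasure E τ, P (x + t) :=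
  cond_absolutelyContinuous.ae_le ((quasiMeasurePreserving_add_left volume x).ae hP)

theorem integrable_ballMeasure {f : E → F} (hf : Continuous f) (hτ : 0 < τ) (x : E) :
    Integrable (fun t ↦ f (x + t)) (ballMeasure E τ) := by
  have hball : volume (Metric.closedBall (0 : E) τ) ≠ 0 :=
    (Metric.measure_closedBall_pos volume _ hτ).ne'
  have hcont : ContinuousOn (fun t ↦ f (x + t)) (Metric.closedBall 0 τ) := by fun_prop
  exact (hcont.integrableOn_compact (isCompact_closedBall 0 τ)).smul_measure
    (ENNReal.inv_ne_top.2 hball)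

variable [NormedSpace ℝ F]

/-- The average of `f` over the ball of radius `τ` about `x`. -/
def ballAverage (τ : ℝ) (f : E → F) (x : E) : F := ∫ t, f (x + t) ∂ballMeasure E τ

theorem norm_ballAverage_sub_le [CompleteSpace F] {f : E → F} (hf : Continuous f) (hτ : 0 < τ)
    {x : E} {c : F} {C : ℝ} (h : ∀ t, ‖t‖ ≤ τ → ‖f (x + t) - c‖ ≤ C) :
    ‖ballAverage τ f x - c‖ ≤ C := by
  have := isProbabilityMeasure_ballMeasure (E := E) hτ
  have hsub : ballAverage τ f x - c = ∫ t, (f (x + t) - c) ∂ballMeasure E τ := by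
    rw [integral_sub (integrable_ballMeasure hf hτ x) (integrable_const c), ballAverage]
    simp
  rw [hsub]
  simpa using norm_integral_le_of_norm_le_const (ae_norm_le_ballMeasure.mono h)

theorem isConvexSmooth_ballAverage {L : ℝ} {g : E → ℝ} {p : E → E} (h : IsConvexSmooth L g p)
    (hL : 0 < L) (hτ : 0 < τ) : IsConvexSmooth L (ballAverage τ g) (ballAverage τ p) := by
  have := isProbabilityMeasure_ballMeasure (E := E) hτ
  have hg : Continuous g :=
    continuous_iff_continuousAt.2 fun x ↦ (h.hasGradientAt x).hasFDerivAt.continuousAt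
  have hp := (h.lipschitzWith hL).continuous
  have hdiff (x v : E) : ballAverage τ g (x + v) - ballAverage τ g x
      = ∫ t, (g (x + t + v) - g (x + t)) ∂ballMeasure E τ := by
    simp only [ballAverage, add_right_comm x _ v]
    exact (integral_sub (integrable_ballMeasure hg hτ _) (integrable_ballMeasure hg hτ _)).symm
  have hdiff_int (x v : E) :
      Integrable (fun t ↦ g (x + t + v) - g (x + t)) (ballMeasure E τ) :=
    integrable_ballMeasure (f := fun y ↦ g (y + v) - g y) (by fun_prop) hτ x
  have hinner (x v : E) : ⟪ballAverage τ p x, v⟫_ℝ = ∫ t, ⟪p (x + t), v⟫_ℝ ∂ballMeasure E τ := by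
    simp only [real_inner_comm v]
    exact (integral_inner (integrable_ballMeasure hp hτ x) v).symm
  have hinner_int (x v : E) : Integrable (fun t ↦ ⟪p (x + t), v⟫_ℝ) (ballMeasure E τ) :=
    integrable_ballMeasure (f := fun y ↦ ⟪p y, v⟫_ℝ) (by fun_prop) hτ x
  constructor <;> intro x v
  · rw [hdiff, hinner]
    exact integral_mono (hinner_int x v) (hdiff_int x v) fun t ↦ h.inner_le (x + t) v
  · calc ballAverage τ g (x + v) - ballAverage τ g x
        = ∫ t, (g (x + t + v) - g (x + t)) ∂ballMeasure E τ := hdiff x v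
      _ ≤ ∫ t, (⟪p (x + t), v⟫_ℝ + L / 2 * ‖v‖ ^ 2) ∂ballMeasure E τ :=
          integral_mono (hdiff_int x v) ((hinner_int x v).add (integrable_const _))
            fun t ↦ h.sub_le (x + t) v
      _ = ⟪ballAverage τ p x, v⟫_ℝ + L / 2 * ‖v‖ ^ 2 := by
          rw [integral_add (hinner_int x v) (integrable_const _), hinner]
          simp

section Lipschitz

variable {p : E → F} {K : NNReal}

theorem integrable_fderiv_ballMeasure [FiniteDimensional ℝ F] (hp : LipschitzWith K p)
    (hτ : 0 < τ) (x : E) : Integrable (fun t ↦ fderiv ℝ p (x + t)) (ballMeasure E τ) := by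
  have := isProbabilityMeasure_ballMeasure (E := E) hτ
  have := FiniteDimensional.complete ℝ F
  borelize (E →L[ℝ] F)
  have hmeas : Measurable fun t ↦ fderiv ℝ p (x + t) :=
    (measurable_fderiv ℝ p).comp (measurable_const_add x)
  exact .of_bound hmeas.aestronglyMeasurable K
    (Eventually.of_forall fun t ↦ norm_fderiv_le_of_lipschitz ℝ hp)

-- Rademacher's theorem differentiates the integrand almost everywhere, and the Lipschitz bound
-- dominates its difference quotients.
theorem hasFDerivAt_ballAverage [FiniteDimensional ℝ F] (hp : LipschitzWith K p) (hτ : 0 < τ)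
    (x : E) : HasFDerivAt (ballAverage τ p) (ballAverage τ (fderiv ℝ p) x) x := by
  have := isProbabilityMeasure_ballMeasure (E := E) hτ
  refine (hasFDerivAt_integral_of_dominated_loc_of_lip (bound := fun _ ↦ K) univ_mem
    (Eventually.of_forall fun y ↦ (integrable_ballMeasure hp.continuous hτ y).1)
    (integrable_ballMeasure hp.continuous hτ x) (integrable_fderiv_ballMeasure hp hτ x).1
    (Eventually.of_forall fun t ↦ ?_) (integrable_const _) ?_).2
  · have hlip := (hp.comp (isometry_add_right t).lipschitz).lipschitzOnWith (s := Set.univ)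
    simpa [Function.comp_def] using hlip
  · filter_upwards [ae_add_ballMeasure hp.ae_differentiableAt x] with t ht
    exact (hasFDerivAt_comp_add_right t).2 ht.hasFDerivAt

end Lipschitz

variable {ι : Type*} [Fintype ι]

theorem diffusionOp_ballAverage_le {b : E} {s : ι → E} {p : E → E} {K : NNReal} {x : E} {c : ℝ}
    (hp : LipschitzWith K p) (hτ : 0 < τ)
    (h : ∀ᵐ t ∂ballMeasure E τ, diffusionOp b s (p (x + t)) (fderiv ℝ p (x + t)) ≤ c) :
    diffusionOp b s (ballAverage τ p x) (ballAverage τ (fderiv ℝ p) x) ≤ c := by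
  have := isProbabilityMeasure_ballMeasure (E := E) hτ
  have hp_int := integrable_ballMeasure hp.continuous hτ x
  have hT_int := integrable_fderiv_ballMeasure hp hτ x
  calc _ = ∫ t, diffusionOp b s (p (x + t)) (fderiv ℝ p (x + t)) ∂ballMeasure E τ :=
        diffusionOp_integral b s hp_int hT_int
    _ ≤ ∫ _, c ∂ballMeasure E τ :=
        integral_mono_ae (integrable_diffusionOp b s hp_int hT_int) (integrable_const c) h
    _ = c := by simp

end BallAverage

theorem eventually_dist_le_of_continuousOn {X Y : Type*} [PseudoMetricSpace X]
    [PseudoMetricSpace Y] {K : Set X} (hK : IsCompact K) {g : X → Y} (hg : ContinuousOn g K) {β : ℝ}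
    (hβ : 0 < β) :
    ∀ᶠ r in 𝓝 (0 : ℝ), ∀ x ∈ K, ∀ y ∈ K, dist x y ≤ r → dist (g x) (g y) ≤ β := by
  obtain ⟨δ, hδ, hgδ⟩ :=
    Metric.uniformContinuousOn_iff_le.1 (hK.uniformContinuousOn_of_continuous hg) β hβ
  filter_upwards [eventually_lt_nhds hδ] with r hr x hx y hy hxy
  exact hgδ x hx y hy (hxy.trans hr.le)

section Regularize

variable {E : Type*} [NormedAddCommGroup E] [InnerProductSpace ℝ E] [FiniteDimensional ℝ E]
  [MeasurableSpace E] [BorelSpace E]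

/-- The average over balls of radius `τ` of the Moreau envelope of `h` with parameter `τ`. Averaging
makes the gradient of the envelope differentiable everywhere. -/
def regularize (τ : ℝ) (h : E → ℝ) : E → ℝ := ballAverage τ (moreauEnvelope τ h)

/-- The gradient of `regularize τ h`. -/
def regularizeGradient (τ : ℝ) (h : E → ℝ) : E → E := ballAverage τ (moreauGradient τ h)

/-- The Hessian of `regularize τ h`. -/
def regularizeHessian (τ : ℝ) (h : E → ℝ) : E → E →L[ℝ] E :=
  ballAverage τ (fderiv ℝ (moreauGradient τ h))

variable {h : E → ℝ} {R : NNReal} {τ : ℝ}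

theorem hasHessianAt_regularize (hc : ConvexOn ℝ Set.univ h) (hR : LipschitzWith R h)
    (hτ : 0 < τ) (x : E) :
    HasHessianAt_s9 (regularize τ h) (regularizeGradient τ h) (regularizeHessian τ h x) x where
  hasGradientAt := Eventually.of_forall (isConvexSmooth_ballAverage
    (isConvexSmooth_moreauEnvelope hc hR hτ) (inv_pos.2 hτ) hτ).hasGradientAt
  hasFDerivAt := hasFDerivAt_ballAverage (lipschitzWith_moreauGradient hc hR hτ) hτ x

theorem abs_regularize_sub_le (hc : ConvexOn ℝ Set.univ h) (hR : LipschitzWith R h)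
    (hτ : 0 < τ) (x : E) : |regularize τ h x - h x| ≤ τ * (R ^ 2 + R) := by
  have henv : Continuous (moreauEnvelope τ h) := continuous_iff_continuousAt.2 fun y ↦
    ((isConvexSmooth_moreauEnvelope hc hR hτ).hasGradientAt y).hasFDerivAt.continuousAt
  refine norm_ballAverage_sub_le henv hτ fun t ht ↦ ?_
  have hlip : |h (x + t) - h x| ≤ R * τ := by
    refine (hR.norm_sub_le (x + t) x).trans ?_
    rw [add_sub_cancel_left]
    gcongr
  calc |moreauEnvelope τ h (x + t) - h x|
      ≤ |moreauEnvelope τ h (x + t) - h (x + t)| + |h (x + t) - h x| := abs_sub_le _ _ _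
    _ ≤ τ * R ^ 2 + R * τ := add_le_add (abs_moreauEnvelope_sub_le hc hR hτ _) hlip
    _ = τ * (R ^ 2 + R) := by ring

theorem tendstoUniformly_regularize (hc : ConvexOn ℝ Set.univ h) (hR : LipschitzWith R h) :
    TendstoUniformly (fun τ ↦ regularize τ h) h (𝓝[>] 0) := by
  refine Metric.tendstoUniformly_iff.2 fun ε hε ↦ ?_
  have hlim : Tendsto (fun τ : ℝ ↦ τ * (R ^ 2 + R : ℝ)) (𝓝[>] 0) (𝓝 0) :=
    tendsto_nhdsWithin_of_tendsto_nhds (by simpa using (continuous_mul_const _).tendsto (0 : ℝ))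
  filter_upwards [hlim.eventually_lt_const hε, self_mem_nhdsWithin] with τ hlt hτ x
  rw [dist_comm, Real.dist_eq]
  exact (abs_regularize_sub_le hc hR hτ x).trans_lt hlt

variable {ι : Type*} [Fintype ι]

theorem diffusionOp_regularize_le (hc : ConvexOn ℝ Set.univ h) (hR : LipschitzWith R h)
    (hτ : 0 < τ) {η : ℝ} (hη : 0 < η) {x b : E} {s : ι → E} {M β κ c : ℝ}
    (hjet : ∀ y ∈ Metric.closedBall x (τ * (R + 1)), ∃ b' s',
      ‖b'‖ ≤ M ∧ ‖b - b'‖ ≤ β ∧ (∀ j, ‖s j - s' j‖ ≤ κ) ∧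
      ∀ p T, IsSubgradient h y p → IsSuperjet (fun y ↦ -h y) y (-p) (-T) →
        diffusionOp b' s' p T ≤ c) :
    diffusionOp b s (regularizeGradient τ h x) (regularizeHessian τ h x)
      ≤ (1 + η) * c + (η * M + β) * R + (1 + η⁻¹) * (Fintype.card ι * (τ⁻¹ * κ ^ 2)) := by
  have hconv := isConvexSmooth_moreauEnvelope hc hR hτ
  have hlip := lipschitzWith_moreauGradient hc hR hτ
  refine diffusionOp_ballAverage_le hlip hτ ?_
  filter_upwards [ae_norm_le_ballMeasure, ae_add_ballMeasure hlip.ae_differentiableAt x]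
    with t ht hdiff
  have hmem : prox τ h (x + t) ∈ Metric.closedBall x (τ * (R + 1)) := by
    rw [mem_closedBall_iff_norm']
    calc ‖x - prox τ h (x + t)‖ = ‖(x + t - prox τ h (x + t)) - t‖ := by congr 1; abel
      _ ≤ τ * R + τ := (norm_sub_le _ _).trans (add_le_add (norm_sub_prox_le hc hR hτ _) ht)
      _ = τ * (R + 1) := by ring
  obtain ⟨b', s', hM, hβ, hκ, hop⟩ := hjet _ hmem
  have hβ0 : 0 ≤ β := (norm_nonneg _).trans hβ
  have hM0 : 0 ≤ M := (norm_nonneg _).trans hM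
  have hgrad := norm_moreauGradient_le hc hR hτ (x + t)
  have hhess : ‖fderiv ℝ (moreauGradient τ h) (x + t)‖ ≤ τ⁻¹ := by
    simpa [hτ.le] using norm_fderiv_le_of_lipschitz ℝ hlip (x₀ := x + t)
  calc _ ≤ _ := diffusionOp_le (hconv.inner_fderiv_nonneg hdiff) hη hκ
    _ ≤ _ := by
      gcongr
      exact hop _ _ (isSubgradient_moreauGradient hc hR hτ _) (isSubjet_prox hc hR hτ hdiff)

theorem tendsto_regularize_error (c₀ c₁ c₂ : ℝ) :
    Tendsto (fun τ ↦ c₀ + (√τ * c₁ + (√τ + τ) * c₂)) (𝓝[>] 0) (𝓝 c₀) := by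
  refine tendsto_nhdsWithin_of_tendsto_nhds ?_
  convert Continuous.tendsto (f := fun τ ↦ c₀ + (√τ * c₁ + (√τ + τ) * c₂)) (by fun_prop) 0
  simp

theorem regularize_error_eq (hτ : 0 < τ) (N B R : ℝ) :
    (1 + (√τ)⁻¹) * (N * (τ⁻¹ * (B * (τ * (R + 1))) ^ 2))
      = (√τ + τ) * (N * (B * (R + 1)) ^ 2) := by
  have hsqrt : 0 < √τ := Real.sqrt_pos.2 hτ
  have hτ_eq : τ = √τ ^ 2 := (Real.sq_sqrt hτ.le).symm
  generalize √τ = η at *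
  subst hτ_eq
  field_simp
  ring

-- The choice `η = √τ` in `diffusionOp_regularize_le` makes every error term vanish as `τ → 0`.
theorem eventually_diffusionOp_regularize_le (hc : ConvexOn ℝ Set.univ h) (hR : LipschitzWith R h)
    {a : E} {ρ ρ' : ℝ} (hρ : ρ < ρ') {b : E → E} {s : E → ι → E} {f : E → ℝ} {B : NNReal}
    (hb : ContinuousOn b (Metric.closedBall a ρ')) (hf : ContinuousOn f (Metric.closedBall a ρ'))
    (hs : ∀ j, LipschitzOnWith B (fun y ↦ s y j) (Metric.closedBall a ρ'))
    (hjet : ∀ y ∈ Metric.closedBall a ρ', ∀ p T, IsSubgradient h y p →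
      IsSuperjet (fun y ↦ -h y) y (-p) (-T) → diffusionOp (b y) (s y) p T ≤ f y)
    {ε : ℝ} (hε : 0 < ε) :
    ∀ᶠ τ in 𝓝[>] 0, ∀ x ∈ Metric.closedBall a ρ,
      diffusionOp (b x) (s x) (regularizeGradient τ h x) (regularizeHessian τ h x) ≤ f x + ε := by
  have hK := isCompact_closedBall a ρ'
  obtain ⟨M, hM⟩ := hK.exists_bound_of_continuousOn hb
  obtain ⟨N, hN⟩ := hK.exists_bound_of_continuousOn hf
  obtain ⟨β, hβ, hβε⟩ : ∃ β > 0, β * (1 + R : ℝ) < ε := by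
    refine ⟨ε / (2 + R), by positivity, ?_⟩
    rw [div_mul_eq_mul_div, div_lt_iff₀ (by positivity)]
    linarith
  have hdist : Tendsto (fun τ : ℝ ↦ τ * (R + 1 : ℝ)) (𝓝[>] 0) (𝓝 0) :=
    tendsto_nhdsWithin_of_tendsto_nhds (by simpa using (continuous_mul_const _).tendsto (0 : ℝ))
  filter_upwards [self_mem_nhdsWithin, hdist.eventually_lt_const (sub_pos.2 hρ),
    hdist.eventually (eventually_dist_le_of_continuousOn hK hb hβ),
    hdist.eventually (eventually_dist_le_of_continuousOn hK hf hβ),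
    (tendsto_regularize_error (β * (1 + R)) (N + β + M * R)
      (Fintype.card ι * (B * (R + 1)) ^ 2)).eventually_lt_const hβε]
    with τ (hτ : 0 < τ) hτρ hτb hτf hτε x hx
  have hx' : x ∈ Metric.closedBall a ρ' := Metric.closedBall_subset_closedBall hρ.le hx
  have hop := diffusionOp_regularize_le (b := b x) (s := s x) (M := M) (β := β)
    (κ := B * (τ * (R + 1))) (c := f x + β) hc hR hτ (Real.sqrt_pos.2 hτ) fun y hy ↦ by
      have hy' : y ∈ Metric.closedBall a ρ' :=
        Metric.closedBall_subset_closedBall' (by linarith [Metric.mem_closedBall.1 hx]) hy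
      rw [Metric.mem_closedBall'] at hy
      refine ⟨b y, s y, hM y hy', ?_, fun j ↦ ?_, fun p T hp hT ↦ (hjet y hy' p T hp hT).trans ?_⟩
      · exact dist_eq_norm (b x) (b y) ▸ hτb x hx' y hy' hy
      · exact dist_eq_norm (s x j) (s y j) ▸
          ((hs j).dist_le_mul x hx' y hy').trans (by gcongr)
      · linarith [neg_le_of_abs_le (hτf x hx' y hy' hy)]
  have hfN : √τ * f x ≤ √τ * N := by
    gcongr
    exact (le_abs_self _).trans (hN x hx')
  rw [regularize_error_eq hτ] at hop
  linarith

end Regularize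

section Asplund

variable {E : Type*} [NormedAddCommGroup E] [InnerProductSpace ℝ E]

/-- The Asplund function of `K`, the supremum over `z ∈ K` of the affine functions
`⟪x, z⟫ - ‖z‖² / 2`. Its convexity expresses the semiconcavity of the squared distance to `K`. -/
def asplund (K : Set E) (x : E) : ℝ := (‖x‖ ^ 2 - Metric.infDist x K ^ 2) / 2

variable {K : Set E} {x y z p : E}

theorem asplund_eq_of_infDist_eq (hz : Metric.infDist x K = dist x z) :
    asplund K x = ⟪x, z⟫_ℝ - ‖z‖ ^ 2 / 2 := by
  rw [asplund, hz, dist_eq_norm, norm_sub_sq_real]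
  ring

theorem le_asplund (hz : z ∈ K) : ⟪x, z⟫_ℝ - ‖z‖ ^ 2 / 2 ≤ asplund K x := by
  have hsq : Metric.infDist x K ^ 2 ≤ ‖x - z‖ ^ 2 := by
    rw [← dist_eq_norm]
    have := Metric.infDist_nonneg (x := x) (s := K)
    gcongr
    exact Metric.infDist_le_dist_of_mem hz
  rw [norm_sub_sq_real] at hsq
  rw [asplund]
  linarith

theorem convexOn_asplund (hK : IsCompact K) (hne : K.Nonempty) :
    ConvexOn ℝ Set.univ (asplund K) := by
  refine ⟨convex_univ, fun x _ y _ s t hs ht hst ↦ ?_⟩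
  obtain ⟨z, hz, hdist⟩ := hK.exists_infDist_eq_dist hne (s • x + t • y)
  calc asplund K (s • x + t • y) = ⟪s • x + t • y, z⟫_ℝ - (s + t) * (‖z‖ ^ 2 / 2) := by
        rw [asplund_eq_of_infDist_eq hdist, hst, one_mul]
    _ = s * (⟪x, z⟫_ℝ - ‖z‖ ^ 2 / 2) + t * (⟪y, z⟫_ℝ - ‖z‖ ^ 2 / 2) := by
        rw [inner_add_left, real_inner_smul_left, real_inner_smul_left]
        ring
    _ ≤ s • asplund K x + t • asplund K y := by
        simp only [smul_eq_mul]
        gcongr <;> exact le_asplund hz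

theorem lipschitzWith_asplund (hK : IsCompact K) (hne : K.Nonempty) {R : NNReal}
    (hR : ∀ z ∈ K, ‖z‖ ≤ R) : LipschitzWith R (asplund K) := by
  refine LipschitzWith.of_le_add_mul R fun x y ↦ ?_
  obtain ⟨z, hz, hdist⟩ := hK.exists_infDist_eq_dist hne x
  have hxy : ⟪x - y, z⟫_ℝ ≤ R * dist x y :=
    calc ⟪x - y, z⟫_ℝ ≤ ‖x - y‖ * ‖z‖ := real_inner_le_norm _ _
      _ ≤ R * dist x y := by
          rw [mul_comm, ← dist_eq_norm]
          gcongr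
          exact hR z hz
  rw [inner_sub_left] at hxy
  linarith [asplund_eq_of_infDist_eq hdist, le_asplund (x := y) hz]

theorem exists_convexOn_lipschitzWith_asplund (hK : IsCompact K) (hne : K.Nonempty) :
    ConvexOn ℝ Set.univ (asplund K) ∧ ∃ R : NNReal, LipschitzWith R (asplund K) := by
  obtain ⟨R, hR⟩ := hK.isBounded.exists_norm_le
  exact ⟨convexOn_asplund hK hne, R.toNNReal,
    lipschitzWith_asplund hK hne fun z hz ↦ (hR z hz).trans (Real.le_coe_toNNReal R)⟩

-- `infDist · K` lies below the parabola `(infDist · K ^ 2 + d ^ 2) / (2 * d)` touching it at `y`.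
theorem isSuperjet_infDist_of_asplund {T : E →L[ℝ] E}
    (hT : IsSuperjet (fun x ↦ -asplund K x) y (-p) (-T)) (hd : 0 < Metric.infDist y K) :
    IsSuperjet (fun x ↦ Metric.infDist x K) y ((Metric.infDist y K)⁻¹ • (y - p))
      ((Metric.infDist y K)⁻¹ • (ContinuousLinearMap.id ℝ E - T)) := by
  set d := Metric.infDist y K with hd_def
  intro ε hε
  filter_upwards [hT (ε * d) (by positivity)] with v hv
  have hparabola : Metric.infDist (y + v) K - d
      ≤ d⁻¹ * ((Metric.infDist (y + v) K ^ 2 - d ^ 2) / 2) := by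
    rw [← div_eq_inv_mul, le_div_iff₀ hd]
    nlinarith [sq_nonneg (Metric.infDist (y + v) K - d)]
  have hsq : (Metric.infDist (y + v) K ^ 2 - d ^ 2) / 2
      = ⟪y, v⟫_ℝ + ‖v‖ ^ 2 / 2 - (asplund K (y + v) - asplund K y) := by
    rw [asplund, asplund, ← hd_def, norm_add_sq_real]
    ring
  have hjet : (Metric.infDist (y + v) K ^ 2 - d ^ 2) / 2
      ≤ ⟪y - p, v⟫_ℝ + 1 / 2 * (‖v‖ ^ 2 - ⟪T v, v⟫_ℝ) + ε * d * ‖v‖ ^ 2 := by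
    simp only [inner_neg_left, neg_apply] at hv
    rw [hsq, inner_sub_left]
    linarith
  have hscale := mul_le_mul_of_nonneg_left hjet (inv_nonneg.2 hd.le)
  have hcancel : d⁻¹ * (ε * d * ‖v‖ ^ 2) = ε * ‖v‖ ^ 2 := by
    field_simp
  simp only [real_inner_smul_left, smul_apply, sub_apply, ContinuousLinearMap.id_apply,
    inner_sub_left v, real_inner_self_eq_norm_sq]
  linarith

-- Danskin's theorem: the projections of `y + t • v` accumulate at a projection of `y` as `t → 0`.
theorem IsSubgradient.exists_inner_le (hp : IsSubgradient (asplund K) y p) (hK : IsCompact K)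
    (hne : K.Nonempty) (v : E) :
    ∃ z ∈ K, Metric.infDist y K = dist y z ∧ ⟪p, v⟫_ℝ ≤ ⟪z, v⟫_ℝ := by
  choose proj hproj_mem hproj using hK.exists_infDist_eq_dist hne
  have hinner {t : ℝ} (ht : 0 < t) : ⟪p, v⟫_ℝ ≤ ⟪proj (y + t • v), v⟫_ℝ := by
    have hsub := hp (y + t • v)
    have hle := le_asplund (x := y) (hproj_mem (y + t • v))
    rw [add_sub_cancel_left, asplund_eq_of_infDist_eq (hproj (y + t • v)), inner_add_left,
      real_inner_smul_left, real_inner_smul_right] at hsub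
    rw [real_inner_comm v (proj _)]
    exact le_of_mul_le_mul_left (by linarith) ht
  set t : ℕ → ℝ := fun k ↦ 1 / ((k : ℝ) + 1)
  obtain ⟨z, hz, φ, hφ, hlim⟩ := hK.tendsto_subseq fun k ↦ hproj_mem (y + t k • v)
  have hy : Tendsto (fun k ↦ y + t (φ k) • v) atTop (𝓝 y) := by
    have ht := tendsto_one_div_add_atTop_nhds_zero_nat (𝕜 := ℝ) |>.comp hφ.tendsto_atTop
    simpa [t] using (ht.smul_const v).const_add y
  refine ⟨z, hz, ?_, ?_⟩
  · refine tendsto_nhds_unique (((Metric.continuous_infDist_pt K).tendsto y).comp hy) ?_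
    exact (hy.dist hlim).congr fun k ↦ (hproj _).symm
  · exact ge_of_tendsto (hlim.inner tendsto_const_nhds)
      (Eventually.of_forall fun k ↦ hinner (by positivity))

theorem IsSubgradient.abs_inner_sub_le (hp : IsSubgradient (asplund K) y p) (hK : IsCompact K)
    (hne : K.Nonempty) {v : E} {c : ℝ}
    (hc : ∀ z ∈ K, Metric.infDist y K = dist y z → |⟪v, y - z⟫_ℝ| ≤ c) :
    |⟪v, y - p⟫_ℝ| ≤ c := by
  obtain ⟨z, hz, hdist, hle⟩ := hp.exists_inner_le hK hne v
  obtain ⟨z', hz', hdist', hle'⟩ := hp.exists_inner_le hK hne (-v)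
  have hlow := neg_le_of_abs_le (hc z hz hdist)
  have hupp := le_of_abs_le (hc z' hz' hdist')
  rw [real_inner_comm, real_inner_comm v z] at hle
  rw [inner_neg_right, inner_neg_right, real_inner_comm, real_inner_comm v z'] at hle'
  rw [inner_sub_right] at hlow hupp
  rw [abs_le, inner_sub_right]
  constructor <;> linarith

end Asplund

theorem tendstoUniformlyOn_comp_of_isCompact {X κ : Type*} [TopologicalSpace X] {S : Set X}
    (hS : IsCompact S) {F : κ → X → ℝ} {f : X → ℝ} {l : Filter κ} (hF : TendstoUniformlyOn F f l S)
    (hf : ContinuousOn f S) {φ : ℝ → ℝ} {U : Set ℝ} (hU : IsOpen U) (hφ : ContinuousOn φ U)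
    (hmaps : Set.MapsTo f S U) :
    TendstoUniformlyOn (fun i x ↦ φ (F i x)) (fun x ↦ φ (f x)) l S := by
  have himage := hS.image_of_continuousOn hf
  obtain ⟨δ, hδ, hsub⟩ := himage.exists_cthickening_subset_open hU hmaps.image_subset
  refine UniformContinuousOn.comp_tendstoUniformlyOn_eventually
    ((Metric.tendstoUniformlyOn_iff.1 hF δ hδ).mono fun i hi x hx ↦ ?_)
    (fun x hx ↦ Metric.self_subset_cthickening _ (Set.mem_image_of_mem f hx))
    (himage.cthickening.uniformContinuousOn_of_continuous (hφ.mono hsub)) hF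
  refine Metric.mem_cthickening_of_dist_le _ (f x) _ _ (Set.mem_image_of_mem f hx) ?_
  exact dist_comm (f x) (F i x) ▸ (hi x hx).le

theorem eventually_exists_isMaxOn_of_tendstoUniformlyOn {X κ : Type*} [TopologicalSpace X]
    {S C : Set X} (hS : IsCompact S) {u w₀ : X → ℝ} {w : κ → X → ℝ} {l : Filter κ}
    (hu : UpperSemicontinuousOn u S) (hw : ∀ᶠ i in l, ContinuousOn (w i) S)
    (hlim : TendstoUniformlyOn w w₀ l S) {a : X} (ha : a ∈ S) {c : ℝ} (hc : 0 < c)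
    (hgap : ∀ x ∈ C, u x + w₀ x + c ≤ u a + w₀ a) :
    ∀ᶠ i in l, ∃ x ∈ S \ C, IsMaxOn (fun y ↦ u y + w i y) S x := by
  filter_upwards [hw, Metric.tendstoUniformlyOn_iff.1 hlim (c / 2) (half_pos hc)] with i hi hdist
  obtain ⟨x, hx, hmax⟩ :=
    UpperSemicontinuousOn.exists_isMaxOn ⟨a, ha⟩ hS (hu.add hi.upperSemicontinuousOn)
  refine ⟨x, ⟨hx, fun hxC ↦ ?_⟩, hmax⟩
  have hax : u a + w i a ≤ u x + w i x := hmax ha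
  have hdx := abs_lt.1 (hdist x hx)
  have hda := abs_lt.1 (hdist a ha)
  linarith [hgap x hxC]

theorem exists_margin {X : Type*} [TopologicalSpace X] {a : X} {D C : X → ℝ} {N : ℕ}
    {B : NNReal} {k lam : ℝ} (hD : ContinuousAt D a) (hC : ContinuousAt C a) (hDa : 0 < D a)
    (hk : 2 * N * B ^ 2 * D a < k) (hlam : 0 < lam) :
    ∃ ε > 0, ∀ᶠ x in 𝓝 a, ε < D x ^ 2 ∧ ε < 2 * k * D x ∧
      ε * |C x| * (D x ^ 2 + ε) ^ 2
        < lam / 2 * ((D x ^ 2 - ε) * (2 * k * D x - ε) - N * (2 * B * D x ^ 2 + ε) ^ 2) := by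
  have hk0 : 0 < k := lt_of_le_of_lt (by positivity) hk
  have _ : ContinuousAt (fun q : ℝ × X ↦ D q.2) (0, a) := hD.comp' continuousAt_snd
  have _ : ContinuousAt (fun q : ℝ × X ↦ C q.2) (0, a) := hC.comp' continuousAt_snd
  have hsq : ∀ᶠ q : ℝ × X in 𝓝 (0, a), q.1 < D q.2 ^ 2 :=
    ContinuousAt.eventually_lt continuousAt_fst (by fun_prop) (by positivity)
  have hlin : ∀ᶠ q : ℝ × X in 𝓝 (0, a), q.1 < 2 * k * D q.2 :=
    ContinuousAt.eventually_lt continuousAt_fst (by fun_prop) (by positivity)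
  have hgap : ∀ᶠ q : ℝ × X in 𝓝 (0, a), q.1 * |C q.2| * (D q.2 ^ 2 + q.1) ^ 2
      < lam / 2 * ((D q.2 ^ 2 - q.1) * (2 * k * D q.2 - q.1)
        - N * (2 * B * D q.2 ^ 2 + q.1) ^ 2) := by
    refine ContinuousAt.eventually_lt (by fun_prop) (by fun_prop) ?_
    have hpos : 0 < lam * D a ^ 3 * (k - 2 * N * B ^ 2 * D a) :=
      mul_pos (by positivity) (sub_pos.2 hk)
    dsimp only
    linarith
  have h := ((hsq.and (hlin.and hgap)).curry_nhds).filter_mono (nhdsWithin_le_nhds (s := Set.Ioi 0))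
  obtain ⟨ε, hε, hε0⟩ := (h.and self_mem_nhdsWithin).exists
  exact ⟨ε, hε0, hε⟩

theorem log_operator_neg {B : NNReal} {k lam ε D G L S C N : ℝ} (hlam : 0 < lam)
    (hε : 0 < ε) (hεD : ε < D ^ 2) (hεk : ε < 2 * k * D) (hG : |G - D ^ 2| < ε)
    (hL : 2 * k * D - ε ≤ L) (hS : S ≤ N * (2 * B * D ^ 2 + ε) ^ 2)
    (hgap : ε * |C| * (D ^ 2 + ε) ^ 2
      < lam / 2 * ((D ^ 2 - ε) * (2 * k * D - ε) - N * (2 * B * D ^ 2 + ε) ^ 2)) :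
    ε * C - lam / 2 * (G⁻¹ * L - (G ^ 2)⁻¹ * S) < 0 := by
  obtain ⟨hGl, hGu⟩ := abs_lt.1 hG
  have hGpos : 0 < G := by linarith
  have hGL : (D ^ 2 - ε) * (2 * k * D - ε) ≤ G * L :=
    mul_le_mul (by linarith) hL (by linarith) hGpos.le
  have hCG : ε * C * G ^ 2 ≤ ε * |C| * (D ^ 2 + ε) ^ 2 := by
    gcongr
    · exact le_abs_self C
    · linarith
  have hmul : (ε * C - lam / 2 * (G⁻¹ * L - (G ^ 2)⁻¹ * S)) * G ^ 2
      = ε * C * G ^ 2 - lam / 2 * (G * L - S) := by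
    field_simp
  refine neg_of_mul_neg_left (b := G ^ 2) ?_ (by positivity)
  rw [hmul]
  have hdiff : lam / 2 * ((D ^ 2 - ε) * (2 * k * D - ε) - N * (2 * B * D ^ 2 + ε) ^ 2)
      ≤ lam / 2 * (G * L - S) := by
    gcongr
  linarith

section SmoothSqDist

variable {E : Type*} [NormedAddCommGroup E] [InnerProductSpace ℝ E] [FiniteDimensional ℝ E]
  [MeasurableSpace E] [BorelSpace E]

/-- The smooth approximation of `infDist · K ^ 2` obtained by regularizing `asplund K`. -/
def smoothSqDist (τ : ℝ) (K : Set E) (x : E) : ℝ := ‖x‖ ^ 2 - 2 * regularize τ (asplund K) x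

/-- The gradient of `smoothSqDist τ K`. -/
def smoothSqDistGradient (τ : ℝ) (K : Set E) (x : E) : E :=
  (2 : ℝ) • (x - regularizeGradient τ (asplund K) x)

/-- The Hessian of `smoothSqDist τ K`. -/
def smoothSqDistHessian (τ : ℝ) (K : Set E) (x : E) : E →L[ℝ] E :=
  (2 : ℝ) • (ContinuousLinearMap.id ℝ E - regularizeHessian τ (asplund K) x)

variable {K : Set E}

theorem hasHessianAt_smoothSqDist (hK : IsCompact K) (hne : K.Nonempty) {τ : ℝ} (hτ : 0 < τ)
    (x : E) :
    HasHessianAt_s9 (smoothSqDist τ K) (smoothSqDistGradient τ K) (smoothSqDistHessian τ K x) x := by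
  obtain ⟨hc, R, hR⟩ := exists_convexOn_lipschitzWith_asplund hK hne
  have h := (HasHessianAt_s9.norm_sub_sq 0 x).sub ((hasHessianAt_regularize hc hR hτ x).const_mul 2)
  simp only [sub_zero, ← smul_sub] at h
  exact h

theorem continuous_smoothSqDist (hK : IsCompact K) (hne : K.Nonempty) {τ : ℝ} (hτ : 0 < τ) :
    Continuous (smoothSqDist τ K) :=
  continuous_iff_continuousAt.2 fun x ↦
    (hasHessianAt_smoothSqDist hK hne hτ x).hasGradientAt.self_of_nhds.hasFDerivAt.continuousAt

theorem tendstoUniformly_smoothSqDist (hK : IsCompact K) (hne : K.Nonempty) :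
    TendstoUniformly (fun τ ↦ smoothSqDist τ K) (fun x ↦ Metric.infDist x K ^ 2) (𝓝[>] 0) := by
  obtain ⟨hc, R, hR⟩ := exists_convexOn_lipschitzWith_asplund hK hne
  refine Metric.tendstoUniformly_iff.2 fun ε hε ↦ ?_
  filter_upwards [Metric.tendstoUniformly_iff.1 (tendstoUniformly_regularize hc hR) (ε / 2)
    (half_pos hε)] with τ hτ x
  have hdist := abs_lt.1 (hτ x)
  rw [asplund] at hdist
  rw [smoothSqDist, Real.dist_eq, abs_lt]
  constructor <;> linarith

theorem eventually_exists_isLocalMax_sub_log (hK : IsCompact K) (hne : K.Nonempty) {a : E}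
    {ρ ε lam : ℝ} (hρ : 0 < ρ) (hε : 0 < ε) {u : E → ℝ}
    (hu : UpperSemicontinuousOn u (Metric.closedBall a ρ))
    (hd : ∀ y ∈ Metric.closedBall a ρ, 0 < Metric.infDist y K)
    (hpos : ∀ᶠ τ in 𝓝[>] 0, ∀ y ∈ Metric.closedBall a ρ, 0 < smoothSqDist τ K y)
    (hmax : IsMaxOn (fun y ↦ u y + lam * Real.log (Metric.infDist y K)) (Metric.closedBall a ρ) a) :
    ∀ᶠ τ in 𝓝[>] 0, ∃ x ∈ Metric.ball a ρ, IsLocalMax (fun y ↦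
      u y - (ε * ‖y - a‖ ^ 2 - lam / 2 * Real.log (smoothSqDist τ K y))) x := by
  have hlog : ContinuousOn (fun t ↦ lam / 2 * Real.log t) (Set.Ioi 0) :=
    (Real.continuousOn_log.mono fun t ht ↦ (Set.mem_Ioi.1 ht).ne').const_smul (lam / 2)
  have hlim := tendstoUniformlyOn_comp_of_isCompact (isCompact_closedBall a ρ)
    (tendstoUniformly_smoothSqDist hK hne).tendstoUniformlyOn
    ((Metric.continuous_infDist_pt K).pow 2).continuousOn isOpen_Ioi hlog
    fun y hy ↦ pow_pos (hd y hy) 2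
  have hcont : ∀ᶠ τ in 𝓝[>] 0, ContinuousOn
      (fun y ↦ lam / 2 * Real.log (smoothSqDist τ K y)) (Metric.closedBall a ρ) := by
    filter_upwards [hpos, self_mem_nhdsWithin] with τ hτ hτ0
    exact hlog.comp (continuous_smoothSqDist hK hne hτ0).continuousOn hτ
  have hpen : Continuous fun y : E ↦ -(ε * ‖y - a‖ ^ 2) := by fun_prop
  have hgap : ∀ x ∈ Metric.sphere a ρ, u x + -(ε * ‖x - a‖ ^ 2)
      + lam / 2 * Real.log (Metric.infDist x K ^ 2) + ε * ρ ^ 2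
      ≤ u a + -(ε * ‖a - a‖ ^ 2) + lam / 2 * Real.log (Metric.infDist a K ^ 2) := fun x hx ↦ by
    have hle : u x + _ ≤ u a + _ := hmax (Metric.sphere_subset_closedBall hx)
    rw [mem_sphere_iff_norm.1 hx, Real.log_pow, Real.log_pow, sub_self, norm_zero]
    push_cast
    linarith
  filter_upwards [eventually_exists_isMaxOn_of_tendstoUniformlyOn (isCompact_closedBall a ρ)
    (hu.add hpen.continuousOn.upperSemicontinuousOn) hcont hlim (Metric.mem_closedBall_self hρ.le)
    (by positivity) hgap] with τ ⟨x, ⟨hx, hxs⟩, hxmax⟩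
  have hball : x ∈ Metric.ball a ρ :=
    lt_of_le_of_ne (Metric.mem_closedBall.1 hx) hxs
  refine ⟨x, hball, ?_⟩
  have hloc := hxmax.isLocalMax (Metric.closedBall_mem_nhds_of_mem hball)
  convert hloc using 2
  ring

theorem eventually_inner_regularizeGradient_le {h : E → ℝ} {R : NNReal}
    (hc : ConvexOn ℝ Set.univ h) (hR : LipschitzWith R h) {a : E} {ρ ρ' : ℝ} (hρ : ρ < ρ')
    {v : E → E} {f : E → ℝ} (hv : ContinuousOn v (Metric.closedBall a ρ'))
    (hf : ContinuousOn f (Metric.closedBall a ρ'))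
    (hp : ∀ y ∈ Metric.closedBall a ρ', ∀ p, IsSubgradient h y p → ⟪v y, p⟫_ℝ ≤ f y)
    {ε : ℝ} (hε : 0 < ε) :
    ∀ᶠ τ in 𝓝[>] 0, ∀ x ∈ Metric.closedBall a ρ,
      ⟪v x, regularizeGradient τ h x⟫_ℝ ≤ f x + ε := by
  have hop := eventually_diffusionOp_regularize_le (ι := Empty) (s := fun _ ↦ Empty.elim) (B := 0)
    hc hR hρ hv hf (fun j ↦ j.elim)
    (fun y hy p _ hsub _ ↦ by simpa [diffusionOp] using hp y hy p hsub) hε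
  simpa [diffusionOp] using hop

end SmoothSqDist

section Barrier

variable {E ι : Type*} [NormedAddCommGroup E] [InnerProductSpace ℝ E] [Fintype ι]

theorem continuousOn_diffusionOp {V : Set E} {b p : E → E} {s : E → ι → E} (hb : ContinuousOn b V)
    (hs : ∀ j, ContinuousOn (fun y ↦ s y j) V) (hp : ContinuousOn p V) (T : E →L[ℝ] E) :
    ContinuousOn (fun y ↦ diffusionOp (b y) (s y) (p y) T) V :=
  (hb.inner hp).add <| continuousOn_finsetSum _ fun j _ ↦
    (T.continuous.comp_continuousOn (hs j)).inner (hs j)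

theorem diffusionOp_log (b : E) (s : ι → E) (q : E) (T : E →L[ℝ] E) (c c' : ℝ) :
    diffusionOp b s (c • q) (c • T - c' • InnerProductSpace.rankOne ℝ q q)
      = c * diffusionOp b s q T - c' * ∑ j, ⟪s j, q⟫_ℝ ^ 2 := by
  have h := diffusionOp_sub b s (c • q) (c' • (0 : E)) (c • T)
    (c' • InnerProductSpace.rankOne ℝ q q)
  rwa [diffusionOp_smul, diffusionOp_smul, diffusionOp_rankOne, smul_zero, sub_zero] at h

theorem diffusionOp_nonneg_of_isLocalMax_sub_log [FiniteDimensional ℝ E] [MeasurableSpace E]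
    [BorelSpace E] {K : Set E} (hK : IsCompact K) (hne : K.Nonempty) {τ ε lam : ℝ} (hτ : 0 < τ)
    {a x v : E} {c : ι → E} {u : E → ℝ} (hpos : 0 < smoothSqDist τ K x)
    (hsub : ∀ p T, IsSuperjet u x p T → 0 ≤ diffusionOp v c p T)
    (hmax : IsLocalMax (fun y ↦
      u y - (ε * ‖y - a‖ ^ 2 - lam / 2 * Real.log (smoothSqDist τ K y))) x) :
    0 ≤ ε * diffusionOp v c ((2 : ℝ) • (x - a)) ((2 : ℝ) • .id ℝ E)
      - lam / 2 * ((smoothSqDist τ K x)⁻¹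
          * diffusionOp v c (smoothSqDistGradient τ K x) (smoothSqDistHessian τ K x)
        - (smoothSqDist τ K x ^ 2)⁻¹ * ∑ j, ⟪c j, smoothSqDistGradient τ K x⟫_ℝ ^ 2) := by
  have htest := ((HasHessianAt_s9.norm_sub_sq a x).const_mul ε).sub
    (((hasHessianAt_smoothSqDist hK hne hτ x).log hpos).const_mul (lam / 2))
  have hop := hsub _ _ (htest.isSuperjet_of_isLocalMax hmax)
  rwa [diffusionOp_sub, diffusionOp_smul _ _ ε, diffusionOp_smul _ _ (lam / 2), diffusionOp_log]
    at hop

/-- On `V` the drift `b` and the columns `s` of the dispersion matrix, frozen at one control, push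
away from `K`: `infDist · K` is a strict supersolution with constant `k`, and the diffusion is
tangential to `K` up to an error of second order in the distance. -/
structure IsBarrierControl (K V : Set E) (b : E → E) (s : E → ι → E) (B : NNReal) (k : ℝ) :
    Prop where
  continuousOn : ContinuousOn b V
  lipschitzOnWith : ∀ j, LipschitzOnWith B (fun y ↦ s y j) V
  le_diffusionOp : ∀ y ∈ V, ∀ p T, IsSuperjet (fun x ↦ Metric.infDist x K) y p T →
    k ≤ diffusionOp (b y) (s y) p T
  abs_inner_sub_le : ∀ y ∈ V, ∀ z ∈ K, Metric.infDist y K = dist y z →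
    ∀ j, |⟪s y j, y - z⟫_ℝ| ≤ B * Metric.infDist y K ^ 2

namespace IsBarrierControl

variable {K V : Set E} {b : E → E} {s : E → ι → E} {B : NNReal} {k : ℝ}

theorem mono {W : Set E} (h : IsBarrierControl K V b s B k) (hWV : W ⊆ V) :
    IsBarrierControl K W b s B k where
  continuousOn := h.continuousOn.mono hWV
  lipschitzOnWith j := (h.lipschitzOnWith j).mono hWV
  le_diffusionOp y hy := h.le_diffusionOp y (hWV hy)
  abs_inner_sub_le y hy := h.abs_inner_sub_le y (hWV hy)

theorem diffusionOp_asplund_le (h : IsBarrierControl K V b s B k) {y p : E} {T : E →L[ℝ] E}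
    (hy : y ∈ V) (hd : 0 < Metric.infDist y K)
    (hT : IsSuperjet (fun x ↦ -asplund K x) y (-p) (-T)) :
    diffusionOp (b y) (s y) p T
      ≤ diffusionOp (b y) (s y) y (.id ℝ E) - k * Metric.infDist y K := by
  have hk := h.le_diffusionOp y hy _ _ (isSuperjet_infDist_of_asplund hT hd)
  rw [diffusionOp_smul, diffusionOp_sub, ← div_eq_inv_mul, le_div_iff₀ hd] at hk
  linarith

variable [FiniteDimensional ℝ E]

section Smooth

variable [MeasurableSpace E] [BorelSpace E] {a : E} {ρ ρ' ε : ℝ}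

theorem eventually_le_diffusionOp (h : IsBarrierControl K (Metric.closedBall a ρ') b s B k)
    (hK : IsCompact K) (hne : K.Nonempty)
    (hd : ∀ y ∈ Metric.closedBall a ρ', 0 < Metric.infDist y K) (hρ : ρ < ρ') (hε : 0 < ε) :
    ∀ᶠ τ in 𝓝[>] 0, ∀ x ∈ Metric.closedBall a ρ, 2 * k * Metric.infDist x K - ε
      ≤ diffusionOp (b x) (s x) (smoothSqDistGradient τ K x) (smoothSqDistHessian τ K x) := by
  obtain ⟨hc, R, hR⟩ := exists_convexOn_lipschitzWith_asplund hK hne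
  have hf : ContinuousOn (fun y ↦ diffusionOp (b y) (s y) y (.id ℝ E) - k * Metric.infDist y K)
      (Metric.closedBall a ρ') :=
    (continuousOn_diffusionOp h.continuousOn (fun j ↦ (h.lipschitzOnWith j).continuousOn)
      continuousOn_id _).sub ((Metric.continuous_infDist_pt K).const_mul k).continuousOn
  filter_upwards [eventually_diffusionOp_regularize_le hc hR hρ h.continuousOn hf h.lipschitzOnWith
    (fun y hy p T _ hT ↦ h.diffusionOp_asplund_le hy (hd y hy) hT) (half_pos hε)] with τ hτ x hx
  rw [smoothSqDistGradient, smoothSqDistHessian, diffusionOp_smul, diffusionOp_sub]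
  linarith [hτ x hx]

theorem eventually_sum_inner_sq_le (h : IsBarrierControl K (Metric.closedBall a ρ') b s B k)
    (hK : IsCompact K) (hne : K.Nonempty) (hρ : ρ < ρ') (hε : 0 < ε) :
    ∀ᶠ τ in 𝓝[>] 0, ∀ x ∈ Metric.closedBall a ρ,
      ∑ j, ⟪s x j, smoothSqDistGradient τ K x⟫_ℝ ^ 2
        ≤ Fintype.card ι * (2 * B * Metric.infDist x K ^ 2 + ε) ^ 2 := by
  obtain ⟨hc, R, hR⟩ := exists_convexOn_lipschitzWith_asplund hK hne
  have hone (c : ℝ) (hc1 : |c| = 1) (j : ι) : ∀ᶠ τ in 𝓝[>] 0, ∀ x ∈ Metric.closedBall a ρ,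
      ⟪c • s x j, regularizeGradient τ (asplund K) x⟫_ℝ
        ≤ ⟪c • s x j, x⟫_ℝ + B * Metric.infDist x K ^ 2 + ε / 2 := by
    have hsj : ContinuousOn (fun y ↦ c • s y j) (Metric.closedBall a ρ') :=
      (h.lipschitzOnWith j).continuousOn.const_smul c
    have hinf : Continuous fun y ↦ B * Metric.infDist y K ^ 2 :=
      ((Metric.continuous_infDist_pt K).pow 2).const_mul _
    refine eventually_inner_regularizeGradient_le hc hR hρ hsj
      ((hsj.inner continuousOn_id).add hinf.continuousOn) (fun y hy p hp ↦ ?_) (half_pos hε)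
    have hperp : |⟪c • s y j, y - p⟫_ℝ| ≤ B * Metric.infDist y K ^ 2 := by
      rw [real_inner_smul_left, abs_mul, hc1, one_mul]
      exact hp.abs_inner_sub_le hK hne fun z hz hdist ↦ h.abs_inner_sub_le y hy z hz hdist j
    have hlow := neg_le_of_abs_le hperp
    rw [inner_sub_right] at hlow
    simp only [Pi.add_apply, id_eq]
    linarith
  filter_upwards [eventually_all.2 (hone 1 (by simp)), eventually_all.2 (hone (-1) (by simp))]
    with τ hpos hneg x hx
  refine (Finset.sum_le_card_nsmul _ _ _ fun j _ ↦ sq_le_sq' ?_ ?_).trans_eq (nsmul_eq_mul _ _)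
  all_goals
    rw [smoothSqDistGradient, inner_smul_right, inner_sub_right]
    have hp := hpos j x hx
    have hn := hneg j x hx
    simp only [one_smul, neg_smul, inner_neg_left] at hp hn
    linarith

end Smooth

theorem not_isLocalMax_add_log (h : IsBarrierControl K V b s B k) {a : E} (hV : V ∈ 𝓝 a)
    (hK : IsCompact K) (hne : K.Nonempty) (hd : 0 < Metric.infDist a K)
    (hk : 2 * Fintype.card ι * B ^ 2 * Metric.infDist a K < k) {u : E → ℝ}
    (hu : UpperSemicontinuousOn u V)
    (hsub : ∀ x ∈ V, ∀ p T, IsSuperjet u x p T → 0 ≤ diffusionOp (b x) (s x) p T)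
    {lam : ℝ} (hlam : 0 < lam) :
    ¬ IsLocalMax (fun y ↦ u y + lam * Real.log (Metric.infDist y K)) a := by
  intro hmax
  borelize E
  have hDcont := Metric.continuous_infDist_pt (α := E) K
  set C : E → ℝ := fun x ↦ diffusionOp (b x) (s x) ((2 : ℝ) • (x - a)) ((2 : ℝ) • .id ℝ E)
  have hC : ContinuousAt C a := (continuousOn_diffusionOp h.continuousOn
    (fun j ↦ (h.lipschitzOnWith j).continuousOn) (by fun_prop) _).continuousAt hV
  obtain ⟨ε, hε, hmargin⟩ := exists_margin hDcont.continuousAt hC hd hk hlam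
  have hDpos := hDcont.continuousAt.eventually_const_lt hd
  obtain ⟨ρ', hρ', hball⟩ := Metric.nhds_basis_closedBall.eventually_iff.1
    ((hmargin.and hDpos).and (hmax.and hV))
  obtain ⟨ρ, hρ, hρρ'⟩ := exists_between hρ'
  have hbig : Metric.closedBall a ρ' ⊆ V := fun y hy ↦ (hball hy).2.2
  have hsmall : Metric.closedBall a ρ ⊆ Metric.closedBall a ρ' :=
    Metric.closedBall_subset_closedBall hρρ'.le
  have hDball : ∀ y ∈ Metric.closedBall a ρ', 0 < Metric.infDist y K := fun y hy ↦ (hball hy).1.2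
  have hclose := Metric.tendstoUniformly_iff.1 (tendstoUniformly_smoothSqDist hK hne) ε hε
  have hpos : ∀ᶠ τ in 𝓝[>] 0, ∀ y ∈ Metric.closedBall a ρ, 0 < smoothSqDist τ K y := by
    filter_upwards [hclose] with τ hτ y hy
    linarith [(abs_lt.1 (hτ y)).2, (hball (hsmall hy)).1.1.1]
  obtain ⟨τ, ⟨x, hx, hxmax⟩, hτ, hclose, hpos, hL, hS⟩ :=
    ((eventually_exists_isLocalMax_sub_log hK hne hρ hε (hu.mono (hsmall.trans hbig))
      (fun y hy ↦ hDball y (hsmall hy)) hpos fun y hy ↦ (hball (hsmall hy)).2.1).and <|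
    eventually_mem_nhdsWithin.and <| hclose.and <| hpos.and <|
    ((h.mono hbig).eventually_le_diffusionOp hK hne hDball hρρ' hε).and
    ((h.mono hbig).eventually_sum_inner_sq_le hK hne hρρ' hε)).exists
  have hx' := Metric.ball_subset_closedBall hx
  obtain ⟨hεD, hεk, hgap⟩ := (hball (hsmall hx')).1.1
  have hop := diffusionOp_nonneg_of_isLocalMax_sub_log hK hne hτ (hpos x hx')
    (hsub x (hbig (hsmall hx'))) hxmax
  have hG : |smoothSqDist τ K x - Metric.infDist x K ^ 2| < ε := by
    simpa only [Real.dist_eq, abs_sub_comm] using hclose x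
  exact hop.not_gt (log_operator_neg hlam hε hεD hεk hG (hL x hx') (hS x hx') hgap)

end IsBarrierControl

end Barrier

section BoundedDomain

variable {X : Type*} [PseudoMetricSpace X] [ProperSpace X] {Ω : Set X} {δ : ℝ}

theorem isCompact_setOf_le_infDist_frontier (hΩ : Bornology.IsBounded Ω) (hδ : 0 < δ) :
    IsCompact {x ∈ Ω | δ ≤ Metric.infDist x (frontier Ω)} := by
  have hset : {x ∈ Ω | δ ≤ Metric.infDist x (frontier Ω)}
      = closure Ω ∩ {x | δ ≤ Metric.infDist x (frontier Ω)} := by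
    refine Set.Subset.antisymm (fun x hx ↦ ⟨subset_closure hx.1, hx.2⟩) fun x hx ↦ ⟨?_, hx.2⟩
    by_contra hxΩ
    have hfr : x ∈ frontier Ω := ⟨hx.1, fun hint ↦ hxΩ (interior_subset hint)⟩
    exact hδ.not_ge (hx.2.trans_eq (Metric.infDist_zero_of_mem hfr))
  rw [hset]
  exact hΩ.isCompact_closure.inter_right
    (isClosed_le continuous_const (Metric.continuous_infDist_pt _))

theorem exists_isMaxOn_of_infDist_frontier_lt (hΩ : Bornology.IsBounded Ω) {f : X → ℝ}
    (hf : UpperSemicontinuousOn f Ω) {w : X} (hw : w ∈ Ω) (hd : 0 < Metric.infDist w (frontier Ω))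
    (hδ : 0 < δ) (hle : ∀ x ∈ Ω, Metric.infDist x (frontier Ω) < δ → f x ≤ f w) :
    ∃ x₀ ∈ Ω, IsMaxOn f Ω x₀ := by
  set S := {x ∈ Ω | min δ (Metric.infDist w (frontier Ω)) ≤ Metric.infDist x (frontier Ω)}
  have hwS : w ∈ S := ⟨hw, min_le_right δ _⟩
  have hS : IsCompact S := isCompact_setOf_le_infDist_frontier hΩ (lt_min hδ hd)
  obtain ⟨x₀, hx₀, hmax⟩ :=
    UpperSemicontinuousOn.exists_isMaxOn ⟨w, hwS⟩ hS (hf.mono fun x hx ↦ hx.1)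
  refine ⟨x₀, hx₀.1, fun x hx ↦ ?_⟩
  have hfw : f w ≤ f x₀ := hmax hwS
  rcases le_or_gt (min δ (Metric.infDist w (frontier Ω))) (Metric.infDist x (frontier Ω)) with h | h
  · exact hmax ⟨hx, h⟩
  · exact (hle x hx (h.trans_le (min_le_left _ _))).trans hfw

variable {u : X → ℝ}

theorem exists_isMaxOn_add_log (hΩ : Bornology.IsBounded Ω)
    (hd : ∀ x ∈ Ω, 0 < Metric.infDist x (frontier Ω)) (hu : UpperSemicontinuousOn u Ω)
    (hne : Ω.Nonempty)
    (hgrowth : ∀ ε > 0, ∃ δ > 0, ∀ x ∈ Ω, Metric.infDist x (frontier Ω) < δ →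
      u x ≤ ε * -Real.log (Metric.infDist x (frontier Ω))) {lam : ℝ} (hlam : 0 < lam) :
    ∃ x₀ ∈ Ω, IsMaxOn (fun y ↦ u y + lam * Real.log (Metric.infDist y (frontier Ω))) Ω x₀ := by
  obtain ⟨w, hw⟩ := hne
  obtain ⟨δ, hδ, hle⟩ := hgrowth (lam / 2) (half_pos hlam)
  have hlog : ContinuousOn (fun y ↦ lam * Real.log (Metric.infDist y (frontier Ω))) Ω :=
    ((Metric.continuous_infDist_pt _).continuousOn.log fun y hy ↦ (hd y hy).ne').const_smul lam
  set M := u w + lam * Real.log (Metric.infDist w (frontier Ω))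
  refine exists_isMaxOn_of_infDist_frontier_lt hΩ (hu.add hlog.upperSemicontinuousOn) hw (hd w hw)
    (lt_min hδ (Real.exp_pos (2 * M / lam))) fun x hx hxδ ↦ ?_
  obtain ⟨hxδ, hxM⟩ := lt_min_iff.1 hxδ
  have hlogx := (Real.log_lt_iff_lt_exp (hd x hx)).2 hxM
  rw [lt_div_iff₀ hlam] at hlogx
  linarith [hle x hx hxδ]

-- Points where `u + lam * log d` is maximal stay away from the frontier, uniformly in `lam → 0`.
theorem exists_isMaxOn_of_not_isLocalMax_add_log (hΩ : Bornology.IsBounded Ω)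
    (hd : ∀ x ∈ Ω, 0 < Metric.infDist x (frontier Ω)) (hu : UpperSemicontinuousOn u Ω)
    (hΩo : IsOpen Ω)
    (hmax : ∀ lam > 0, ∃ x₀ ∈ Ω,
      IsMaxOn (fun y ↦ u y + lam * Real.log (Metric.infDist y (frontier Ω))) Ω x₀)
    (hδ : 0 < δ) (hloc : ∀ x ∈ Ω, Metric.infDist x (frontier Ω) < δ → ∀ lam > 0,
      ¬ IsLocalMax (fun y ↦ u y + lam * Real.log (Metric.infDist y (frontier Ω))) x) :
    ∃ x₀ ∈ Ω, IsMaxOn u Ω x₀ := by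
  set S := {x ∈ Ω | δ ≤ Metric.infDist x (frontier Ω)}
  have hS : IsCompact S := isCompact_setOf_le_infDist_frontier hΩ hδ
  have hmaxS : ∀ lam > 0, ∃ x₀ ∈ S,
      IsMaxOn (fun y ↦ u y + lam * Real.log (Metric.infDist y (frontier Ω))) Ω x₀ := by
    intro lam hlam
    obtain ⟨x, hx, hxmax⟩ := hmax lam hlam
    refine ⟨x, ⟨hx, not_lt.1 fun hlt ↦ hloc x hx hlt lam hlam ?_⟩, hxmax⟩
    exact hxmax.isLocalMax (hΩo.mem_nhds hx)
  obtain ⟨x₁, hx₁, -⟩ := hmaxS 1 one_pos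
  obtain ⟨x₀, hx₀, hx₀max⟩ :=
    UpperSemicontinuousOn.exists_isMaxOn ⟨x₁, hx₁⟩ hS (hu.mono fun x hx ↦ hx.1)
  have hlog : ContinuousOn (fun y ↦ Real.log (Metric.infDist y (frontier Ω))) S :=
    (Metric.continuous_infDist_pt _).continuousOn.log fun y hy ↦ (hd y hy.1).ne'
  obtain ⟨L, hL⟩ := hS.exists_bound_of_continuousOn hlog
  refine ⟨x₀, hx₀.1, fun w hw ↦ ?_⟩
  have hbound : ∀ᶠ lam in 𝓝[>] (0 : ℝ),
      u w ≤ u x₀ + lam * (L - Real.log (Metric.infDist w (frontier Ω))) := by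
    filter_upwards [self_mem_nhdsWithin] with lam (hlam : 0 < lam)
    obtain ⟨x, hx, hxmax⟩ := hmaxS lam hlam
    have hwx : u w + _ ≤ u x + _ := hxmax hw
    have hxx₀ : u x ≤ u x₀ := hx₀max hx
    have hxL := mul_le_mul_of_nonneg_left ((le_abs_self _).trans (hL x hx)) hlam.le
    linarith
  have hlim : Continuous fun lam : ℝ ↦
      u x₀ + lam * (L - Real.log (Metric.infDist w (frontier Ω))) := by fun_prop
  refine ge_of_tendsto (tendsto_nhdsWithin_of_tendsto_nhds ?_) hbound
  simpa using hlim.tendsto 0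

end BoundedDomain

section BoundaryStrip

variable {E ι : Type*} [NormedAddCommGroup E] [InnerProductSpace ℝ E] [Fintype ι]
  {Ω U : Set E} {b : E → E} {s : E → ι → E} {B : NNReal} {k : ℝ} {z : E}

/-- The drift `b` and the columns `s` of the dispersion matrix, frozen at one control, make the
distance to the frontier of `Ω` a strict supersolution on `Ω ∩ U` with constant `k`, and the
diffusion is tangential to the frontier in `U`. -/
structure IsBoundaryControl (Ω U : Set E) (b : E → E) (s : E → ι → E) (B : NNReal) (k : ℝ) :
    Prop where
  pos : 0 < k
  continuousOn : ContinuousOn b Ω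
  lipschitzOnWith : ∀ j, LipschitzOnWith B (fun y ↦ s y j) (closure Ω)
  le_diffusionOp : ∀ y ∈ Ω ∩ U, ∀ p T, IsSuperjet (fun x ↦ Metric.infDist x (frontier Ω)) y p T →
    k ≤ diffusionOp (b y) (s y) p T
  inner_sub_eq_zero : ∀ w ∈ frontier Ω ∩ U, ∀ y ∈ Ω, Metric.infDist y (frontier Ω) = dist y w →
    ∀ j, ⟪s w j, y - w⟫_ℝ = 0

namespace IsBoundaryControl

theorem isBarrierControl (h : IsBoundaryControl Ω U b s B k) (hz : z ∈ frontier Ω) {ρ : ℝ}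
    (hρ : Metric.ball z ρ ⊆ U) :
    IsBarrierControl (frontier Ω) (Ω ∩ Metric.ball z (ρ / 2)) b s B k where
  continuousOn := h.continuousOn.mono Set.inter_subset_left
  lipschitzOnWith j := (h.lipschitzOnWith j).mono (Set.inter_subset_left.trans subset_closure)
  le_diffusionOp y hy := by
    have hρ0 : 0 < ρ / 2 := Metric.pos_of_mem_ball hy.2
    exact h.le_diffusionOp y ⟨hy.1, hρ (Metric.ball_subset_ball (by linarith) hy.2)⟩
  abs_inner_sub_le y hy w hw hdist j := by
    have hyz : dist y z < ρ / 2 := hy.2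
    have hyw : dist y w ≤ dist y z := hdist ▸ Metric.infDist_le_dist_of_mem hz
    have hwU : w ∈ U := hρ <| by
      rw [Metric.mem_ball]
      linarith [dist_triangle_left w z y]
    have hperp := h.inner_sub_eq_zero w ⟨hw, hwU⟩ y hy.1 hdist j
    calc |⟪s y j, y - w⟫_ℝ| = |⟪s y j - s w j, y - w⟫_ℝ| := by rw [inner_sub_left, hperp, sub_zero]
      _ ≤ ‖s y j - s w j‖ * ‖y - w‖ := abs_real_inner_le_norm _ _
      _ ≤ B * ‖y - w‖ * ‖y - w‖ := by
          gcongr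
          exact (h.lipschitzOnWith j).norm_sub_le (subset_closure hy.1) hw.1
      _ = B * Metric.infDist y (frontier Ω) ^ 2 := by rw [hdist, dist_eq_norm]; ring

variable [FiniteDimensional ℝ E] {u : E → ℝ}

theorem eventually_not_isLocalMax_add_log (h : IsBoundaryControl Ω U b s B k) (hΩo : IsOpen Ω)
    (hΩ : Bornology.IsBounded Ω) (hz : z ∈ frontier Ω) (hU : U ∈ 𝓝 z)
    (hu : UpperSemicontinuousOn u Ω)
    (hsub : ∀ x ∈ Ω, ∀ p T, IsSuperjet u x p T → 0 ≤ diffusionOp (b x) (s x) p T) :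
    ∀ᶠ x in 𝓝 z, x ∈ Ω → ∀ lam > 0,
      ¬ IsLocalMax (fun y ↦ u y + lam * Real.log (Metric.infDist y (frontier Ω))) x := by
  obtain ⟨ρ, hρ, hball⟩ := Metric.mem_nhds_iff.1 hU
  have hcont : Continuous fun x ↦
      2 * Fintype.card ι * (B : ℝ) ^ 2 * Metric.infDist x (frontier Ω) :=
    (Metric.continuous_infDist_pt _).const_mul _
  have hsmall := hcont.tendsto z |>.eventually_lt_const (u := k) <| by
    simpa [Metric.infDist_zero_of_mem hz] using h.pos
  filter_upwards [hsmall, Metric.ball_mem_nhds z (half_pos hρ)] with x hk hxz hx lam hlam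
  have hd : 0 < Metric.infDist x (frontier Ω) :=
    (isClosed_frontier.notMem_iff_infDist_pos ⟨z, hz⟩).1 fun hfr ↦
      hΩo.frontier_eq ▸ hfr |>.2 hx
  have hV : Ω ∩ Metric.ball z (ρ / 2) ∈ 𝓝 x := (hΩo.inter Metric.isOpen_ball).mem_nhds ⟨hx, hxz⟩
  have hcpt : IsCompact (frontier Ω) :=
    hΩ.isCompact_closure.of_isClosed_subset isClosed_frontier frontier_subset_closure
  exact (h.isBarrierControl hz hball).not_isLocalMax_add_log hV hcpt ⟨z, hz⟩ hd hk
    (hu.mono Set.inter_subset_left) (fun y hy ↦ hsub y hy.1) hlam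

end IsBoundaryControl

theorem exists_isMaxOn_of_isBoundaryControl [FiniteDimensional ℝ E] {u : E → ℝ} (hΩo : IsOpen Ω)
    (hΩ : Bornology.IsBounded Ω) (hne : Ω.Nonempty)
    (hcontrol : ∀ z ∈ frontier Ω, ∃ U ∈ 𝓝 z, ∃ (b : E → E) (s : E → ι → E) (B : NNReal) (k : ℝ),
      IsBoundaryControl Ω U b s B k ∧
        ∀ x ∈ Ω, ∀ p T, IsSuperjet u x p T → 0 ≤ diffusionOp (b x) (s x) p T)
    (hu : UpperSemicontinuousOn u Ω)
    (hgrowth : ∀ ε > 0, ∃ δ > 0, ∀ x ∈ Ω, Metric.infDist x (frontier Ω) < δ →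
      u x ≤ ε * -Real.log (Metric.infDist x (frontier Ω))) :
    ∃ x₀ ∈ Ω, IsMaxOn u Ω x₀ := by
  have hcpt : IsCompact (frontier Ω) :=
    hΩ.isCompact_closure.of_isClosed_subset isClosed_frontier frontier_subset_closure
  rcases (frontier Ω).eq_empty_or_nonempty with hfr | hfr
  · have hclosed : IsClosed Ω := (isClopen_iff_frontier_eq_empty.2 hfr).1
    exact UpperSemicontinuousOn.exists_isMaxOn hne
      (Metric.isCompact_of_isClosed_isBounded hclosed hΩ) hu
  have hd : ∀ x ∈ Ω, 0 < Metric.infDist x (frontier Ω) := fun x hx ↦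
    (isClosed_frontier.notMem_iff_infDist_pos hfr).1 fun hxfr ↦ (hΩo.frontier_eq ▸ hxfr).2 hx
  have hnear : ∀ᶠ x in 𝓝ˢ (frontier Ω), x ∈ Ω → ∀ lam > 0,
      ¬ IsLocalMax (fun y ↦ u y + lam * Real.log (Metric.infDist y (frontier Ω))) x := by
    refine eventually_nhdsSet_iff_forall.2 fun z hz ↦ ?_
    obtain ⟨U, hU, b, s, B, k, hctrl, hsub⟩ := hcontrol z hz
    exact hctrl.eventually_not_isLocalMax_add_log hΩo hΩ hz hU hu hsub
  obtain ⟨δ, hδ, hstrip⟩ := (Metric.hasBasis_nhdsSet_thickening hcpt).eventually_iff.1 hnear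
  exact exists_isMaxOn_of_not_isLocalMax_add_log hΩ hd hu hΩo
    (fun lam hlam ↦ exists_isMaxOn_add_log hΩ hd hu hne hgrowth hlam) hδ
    fun x hx hlt ↦ hstrip ((Metric.mem_thickening_iff_infDist_lt hfr).2 hlt) hx

end BoundaryStrip

section Matrices

variable {n r : ℕ}

/-- The `j`-th column of `M`, as a vector of Euclidean space. -/
def column (M : Matrix (Fin n) (Fin r) ℝ) (j : Fin r) : EuclideanSpace ℝ (Fin n) :=
  WithLp.toLp 2 (M.col j)

theorem column_sub (M N : Matrix (Fin n) (Fin r) ℝ) (j : Fin r) :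
    column (M - N) j = column M j - column N j := rfl

theorem sigmaT_apply (M : Matrix (Fin n) (Fin r) ℝ) (v : EuclideanSpace ℝ (Fin n)) (j : Fin r) :
    sigmaT M v j = ⟪column M j, v⟫_ℝ := by
  simp [sigmaT, column, Matrix.mulVec, dotProduct, PiLp.inner_apply, mul_comm]

theorem norm_column_le (M : Matrix (Fin n) (Fin r) ℝ) (j : Fin r) : ‖column M j‖ ≤ mnorm M := by
  rw [EuclideanSpace.norm_eq, mnorm]
  refine Real.sqrt_le_sqrt (Finset.sum_le_sum fun i _ ↦ ?_)
  rw [Real.norm_eq_abs, sq_abs]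
  exact Finset.single_le_sum (f := fun j ↦ M i j ^ 2) (fun _ _ ↦ sq_nonneg _) (Finset.mem_univ j)

theorem trace_mul_transpose_mul (M : Matrix (Fin n) (Fin r) ℝ) (X : Matrix (Fin n) (Fin n) ℝ) :
    (M * Mᵀ * X).trace = ∑ j, quadForm X (column M j) := by
  rw [Matrix.mul_assoc, Matrix.trace_mul_comm, Matrix.trace]
  refine Finset.sum_congr rfl fun j _ ↦ ?_
  simp only [Matrix.diag, Matrix.mul_apply, Matrix.transpose_apply, quadForm, column, Matrix.col,
    Finset.sum_mul]
  rw [Finset.sum_comm]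
  exact Finset.sum_congr rfl fun i _ ↦ Finset.sum_congr rfl fun l _ ↦ by ring

theorem quadForm_eq_inner_toEuclideanCLM (X : Matrix (Fin n) (Fin n) ℝ)
    (v : EuclideanSpace ℝ (Fin n)) :
    quadForm X v = ⟪Matrix.toEuclideanCLM (𝕜 := ℝ) X v, v⟫_ℝ := by
  simp only [quadForm, PiLp.inner_apply, Matrix.ofLp_toEuclideanCLM, Matrix.mulVec, dotProduct,
    RCLike.inner_apply, conj_trivial, Finset.mul_sum]
  exact Finset.sum_congr rfl fun i _ ↦ Finset.sum_congr rfl fun l _ ↦ by ring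

theorem quadForm_transpose (X : Matrix (Fin n) (Fin n) ℝ) (v : EuclideanSpace ℝ (Fin n)) :
    quadForm Xᵀ v = quadForm X v := by
  rw [quadForm, Finset.sum_comm]
  exact Finset.sum_congr rfl fun i _ ↦ Finset.sum_congr rfl fun l _ ↦ mul_right_comm _ _ _

/-- The symmetric matrix having the same quadratic form as `T`; it translates the superjets
`IsSuperjet` into the matrix superjets `J2plus`. -/
def hessianMatrix (T : EuclideanSpace ℝ (Fin n) →L[ℝ] EuclideanSpace ℝ (Fin n)) :
    Matrix (Fin n) (Fin n) ℝ :=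
  (1 / 2 : ℝ) • (Matrix.toEuclideanCLM (𝕜 := ℝ).symm T + (Matrix.toEuclideanCLM (𝕜 := ℝ).symm T)ᵀ)

variable {x p : EuclideanSpace ℝ (Fin n)}
  {T : EuclideanSpace ℝ (Fin n) →L[ℝ] EuclideanSpace ℝ (Fin n)}

theorem isSymm_hessianMatrix : (hessianMatrix T).IsSymm :=
  (Matrix.isSymm_add_transpose_self _).smul _

theorem quadForm_hessianMatrix (v : EuclideanSpace ℝ (Fin n)) :
    quadForm (hessianMatrix T) v = ⟪T v, v⟫_ℝ := by
  have htr := quadForm_transpose (Matrix.toEuclideanCLM (𝕜 := ℝ).symm T) v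
  rw [quadForm_eq_inner_toEuclideanCLM, quadForm_eq_inner_toEuclideanCLM] at htr
  rw [quadForm_eq_inner_toEuclideanCLM, hessianMatrix, map_smul, map_add]
  simp only [smul_apply, add_apply, real_inner_smul_left, inner_add_left, htr,
    StarAlgEquiv.apply_symm_apply]
  ring

theorem IsSuperjet.mem_J2plus {u : EuclideanSpace ℝ (Fin n) → ℝ} (h : IsSuperjet u x p T)
    (S : Set (EuclideanSpace ℝ (Fin n))) : (p, hessianMatrix T) ∈ J2plus S u x := by
  refine ⟨isSymm_hessianMatrix, fun ε hε ↦ nhdsWithin_le_nhds ?_⟩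
  have hlim : Tendsto (fun y ↦ y - x) (𝓝 x) (𝓝 0) := by
    simpa using (continuous_id.sub continuous_const).tendsto (x := x) (f := fun y ↦ y - x)
  filter_upwards [hlim.eventually (h ε hε)] with y hy
  simpa [quadForm_hessianMatrix] using hy

theorem diffusionOp_column (b : EuclideanSpace ℝ (Fin n)) (M : Matrix (Fin n) (Fin r) ℝ) :
    diffusionOp b (column M) p T = ⟪b, p⟫_ℝ + (M * Mᵀ * hessianMatrix T).trace := by
  simp only [diffusionOp, trace_mul_transpose_mul, quadForm_hessianMatrix]

end Matrices

section Bellman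

variable {n m r : ℕ} {Ω : Set (EuclideanSpace ℝ (Fin n))} {A : Set (Fin m → ℝ)} {α : Fin m → ℝ}
  {b : EuclideanSpace ℝ (Fin n) → (Fin m → ℝ) → EuclideanSpace ℝ (Fin n)}
  {σ : EuclideanSpace ℝ (Fin n) → (Fin m → ℝ) → Matrix (Fin n) (Fin r) ℝ}

theorem diffusionOp_nonneg_of_Fop_nonpos {x p : EuclideanSpace ℝ (Fin n)}
    {T : EuclideanSpace ℝ (Fin n) →L[ℝ] EuclideanSpace ℝ (Fin n)}
    (hb : ∃ C, ∀ α ∈ A, ‖b x α‖ ≤ C) (hσ : ∃ C, ∀ α ∈ A, mnorm (σ x α) ≤ C) (hα : α ∈ A)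
    (hF : Fop A b σ x p (hessianMatrix T) ≤ 0) :
    0 ≤ diffusionOp (b x α) (column (σ x α)) p T := by
  obtain ⟨C, hC⟩ := hb
  obtain ⟨D, hD⟩ := hσ
  have hbdd : BddAbove
      ((fun α ↦ -⟪b x α, p⟫_ℝ - (σ x α * (σ x α)ᵀ * hessianMatrix T).trace) '' A) := by
    refine ⟨C * ‖p‖ + r * (‖T‖ * D ^ 2), ?_⟩
    rintro _ ⟨α, hα, rfl⟩
    have hcol (j : Fin r) : ‖column (σ x α) j‖ ≤ D := (norm_column_le _ j).trans (hD α hα)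
    have hle := abs_diffusionOp_le (b := b x α) (p := p) (T := T) hcol
    have hCp : ‖b x α‖ * ‖p‖ ≤ C * ‖p‖ := by gcongr; exact hC α hα
    rw [diffusionOp_column, Fintype.card_fin] at hle
    linarith [neg_le_of_abs_le hle]
  have hle := (le_csSup hbdd ⟨α, hα, rfl⟩).trans hF
  rw [diffusionOp_column]
  linarith

theorem inner_column_sub_eq_zero {M : Matrix (Fin n) (Fin r) ℝ} {w y : EuclideanSpace ℝ (Fin n)}
    (hM : ∀ ν ∈ normalDirs Ω w, sigmaT M ν = 0) (hy : y ∈ Ω) (hdist : bdist Ω y = dist y w)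
    (j : Fin r) : ⟪column M j, y - w⟫_ℝ = 0 := by
  rcases eq_or_ne y w with rfl | hne
  · simp
  have hnorm : ‖y - w‖ ≠ 0 := norm_ne_zero_iff.2 (sub_ne_zero.2 hne)
  have hν : ‖y - w‖⁻¹ • (y - w) ∈ normalDirs Ω w := by
    refine ⟨norm_smul_inv_norm (sub_ne_zero.2 hne), y, hy, ?_⟩
    rw [hdist, dist_eq_norm, smul_inv_smul₀ hnorm, add_sub_cancel]
  have hzero := congrFun (hM _ hν) j
  rw [sigmaT_apply, real_inner_smul_right] at hzero
  simpa [hnorm] using hzero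

theorem isBoundaryControl_column {U : Set (EuclideanSpace ℝ (Fin n))} {B k : ℝ} (hk : 0 < k)
    (hb : ContinuousOn (b · α) Ω)
    (hσ : ∀ x ∈ closure Ω, ∀ y ∈ closure Ω, mnorm (σ x α - σ y α) ≤ B * ‖x - y‖)
    (hsub : ∀ x ∈ Ω ∩ U, ∀ pY ∈ J2plus (closure Ω) (bdist Ω) x,
      -⟪b x α, pY.1⟫_ℝ - (σ x α * (σ x α)ᵀ * pY.2).trace ≤ -k)
    (hperp : ∀ w ∈ frontier Ω ∩ U, ∀ ν ∈ normalDirs Ω w, sigmaT (σ w α) ν = 0) :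
    IsBoundaryControl Ω U (b · α) (fun x ↦ column (σ x α)) B.toNNReal k where
  pos := hk
  continuousOn := hb
  lipschitzOnWith j := LipschitzOnWith.of_dist_le_mul fun x hx y hy ↦ by
    rw [dist_eq_norm, dist_eq_norm, ← column_sub]
    calc _ ≤ mnorm (σ x α - σ y α) := norm_column_le _ j
      _ ≤ B * ‖x - y‖ := hσ x hx y hy
      _ ≤ B.toNNReal * ‖x - y‖ := by gcongr; exact B.le_coe_toNNReal
  le_diffusionOp y hy p T hT := by
    have hle := hsub y hy _ (hT.mem_J2plus (closure Ω))
    rw [diffusionOp_column]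
    linarith
  inner_sub_eq_zero w hw y hy hdist := inner_column_sub_eq_zero (hperp w hw) hy hdist

end Bellman

theorem statement_9_general {n m r : ℕ} {Ω : Set (EuclideanSpace ℝ (Fin n))} (hΩo : IsOpen Ω)
    (hΩne : Ω.Nonempty) (hΩbdd : Bornology.IsBounded Ω) {A : Set (Fin m → ℝ)}
    {b : EuclideanSpace ℝ (Fin n) → (Fin m → ℝ) → EuclideanSpace ℝ (Fin n)}
    {σ : EuclideanSpace ℝ (Fin n) → (Fin m → ℝ) → Matrix (Fin n) (Fin r) ℝ}
    (hbBdd : ∀ x ∈ Ω, ∃ C, ∀ α ∈ A, ‖b x α‖ ≤ C)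
    (hσBdd : ∀ x ∈ Ω, ∃ C, ∀ α ∈ A, mnorm (σ x α) ≤ C)
    (hbCont : ∀ α ∈ A, ContinuousOn (b · α) Ω)
    (hσLip : ∀ α ∈ A, ∃ B : ℝ, ∀ x ∈ closure Ω, ∀ y ∈ closure Ω,
      mnorm (σ x α - σ y α) ≤ B * ‖x - y‖)
    (hcond : ∀ z ∈ frontier Ω, ∃ α₀ ∈ A, ∃ U : Set (EuclideanSpace ℝ (Fin n)),
      IsOpen U ∧ z ∈ U ∧ ∃ k > (0 : ℝ),
        (∀ x ∈ Ω ∩ U, ∀ pY ∈ J2plus (closure Ω) (bdist Ω) x,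
          -⟪b x α₀, pY.1⟫_ℝ - Matrix.trace (σ x α₀ * (σ x α₀)ᵀ * pY.2) ≤ -k) ∧
        (∀ w ∈ frontier Ω ∩ U, ∀ ν ∈ normalDirs Ω w, sigmaT (σ w α₀) ν = 0))
    {u : EuclideanSpace ℝ (Fin n) → ℝ} (hu : UpperSemicontinuousOn u Ω)
    (husub : ∀ x ∈ Ω, ∀ pX ∈ J2plus Ω u x, Fop A b σ x pX.1 pX.2 ≤ 0)
    (hgrowth : ∀ ε > (0 : ℝ), ∃ δ > 0, ∀ x ∈ Ω, bdist Ω x < δ →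
      u x ≤ ε * (-Real.log (bdist Ω x))) :
    ∃ x₀ ∈ Ω, ∀ x ∈ Ω, u x ≤ u x₀ := by
  refine exists_isMaxOn_of_isBoundaryControl (ι := Fin r) hΩo hΩbdd hΩne (fun z hz ↦ ?_) hu hgrowth
  obtain ⟨α, hα, U, hUo, hzU, k, hk, hsub, hperp⟩ := hcond z hz
  obtain ⟨B, hB⟩ := hσLip α hα
  refine ⟨U, hUo.mem_nhds hzU, (b · α), fun x ↦ column (σ x α), B.toNNReal, k,
    isBoundaryControl_column hk (hbCont α hα) hB hsub hperp, fun x hx p T hT ↦ ?_⟩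
  have hF := husub x hx (p, hessianMatrix T) (hT.mem_J2plus Ω)
  exact diffusionOp_nonneg_of_Fop_nonpos (hbBdd x hx) (hσBdd x hx) hα hF

theorem statement_9
    {n m r : ℕ} (Ω : Set (EuclideanSpace ℝ (Fin n)))
    (hΩo : IsOpen Ω) (hΩconn : IsConnected Ω) (hΩbdd : Bornology.IsBounded Ω)
    (A : Set (Fin m → ℝ)) (hA : IsClosed A) (hAne : A.Nonempty)
    (b : EuclideanSpace ℝ (Fin n) → (Fin m → ℝ) → EuclideanSpace ℝ (Fin n))
    (σ : EuclideanSpace ℝ (Fin n) → (Fin m → ℝ) → Matrix (Fin n) (Fin r) ℝ)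
    (hbBdd : ∃ C, ∀ x ∈ closure Ω, ∀ α ∈ A, ‖b x α‖ ≤ C)
    (hσBdd : ∃ C, ∀ x ∈ closure Ω, ∀ α ∈ A, mnorm (σ x α) ≤ C)
    (hbCont : ContinuousOn (fun q : EuclideanSpace ℝ (Fin n) × (Fin m → ℝ) => b q.1 q.2)
      (closure Ω ×ˢ A))
    (hσCont : ContinuousOn (fun q : EuclideanSpace ℝ (Fin n) × (Fin m → ℝ) => σ q.1 q.2)
      (closure Ω ×ˢ A))
    (B : ℝ) (hB : 0 < B)
    (hbLip : ∀ x ∈ closure Ω, ∀ y ∈ closure Ω, ∀ α ∈ A, ‖b x α - b y α‖ ≤ B * ‖x - y‖)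
    (hσLip : ∀ x ∈ closure Ω, ∀ y ∈ closure Ω, ∀ α ∈ A,
      mnorm (σ x α - σ y α) ≤ B * ‖x - y‖)
    (hcond : ∀ z ∈ frontier Ω, ∃ α₀ ∈ A, ∃ U : Set (EuclideanSpace ℝ (Fin n)),
      IsOpen U ∧ z ∈ U ∧ ∃ k > (0 : ℝ),
        (∀ x ∈ Ω ∩ U, ∀ pY ∈ J2plus (closure Ω) (bdist Ω) x,
          -⟪b x α₀, pY.1⟫_ℝ - Matrix.trace (σ x α₀ * (σ x α₀)ᵀ * pY.2) ≤ -k) ∧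
        (∀ w ∈ frontier Ω ∩ U, ∀ ν ∈ normalDirs Ω w, sigmaT (σ w α₀) ν = 0))
    (hSMP : ∀ w : EuclideanSpace ℝ (Fin n) → ℝ, UpperSemicontinuousOn w Ω →
      (∀ x ∈ Ω, ∀ pX ∈ J2plus Ω w x, Fop A b σ x pX.1 pX.2 ≤ 0) →
      (∃ x₀ ∈ Ω, ∀ x ∈ Ω, w x ≤ w x₀) → ∀ x ∈ Ω, ∀ y ∈ Ω, w x = w y)
    (u : EuclideanSpace ℝ (Fin n) → ℝ) (hu : UpperSemicontinuousOn u Ω)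
    (husub : ∀ x ∈ Ω, ∀ pX ∈ J2plus Ω u x, Fop A b σ x pX.1 pX.2 ≤ 0)
    (hgrowth : ∀ ε > (0 : ℝ), ∃ δ, 0 < δ ∧ δ < 1 ∧
      ∀ x ∈ Ω, bdist Ω x < δ → u x ≤ ε * (-Real.log (bdist Ω x))) :
    ∀ x ∈ Ω, ∀ y ∈ Ω, u x = u y := by
  refine hSMP u hu husub (statement_9_general hΩo hΩconn.nonempty hΩbdd
    (fun x hx ↦ hbBdd.imp fun C hC ↦ hC x (subset_closure hx))
    (fun x hx ↦ hσBdd.imp fun C hC ↦ hC x (subset_closure hx))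
    (fun α hα ↦ ?_) (fun α hα ↦ ⟨B, fun x hx y hy ↦ hσLip x hx y hy α hα⟩) hcond hu husub
    fun ε hε ↦ ?_)
  · exact hbCont.comp (f := fun x ↦ (x, α)) (by fun_prop) fun x hx ↦ ⟨subset_closure hx, hα⟩
  · obtain ⟨δ, hδ, -, hle⟩ := hgrowth ε hε
    exact ⟨δ, hδ, hle⟩
end
end
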